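/- (Theorem 1.2, part 1) Let d ≥ 3 and 1 ≤ m ≤ d−2. Assume λ > 0 satisfies χ(λ) := e^λ (m/(d+1) + (1 − m/(d+1)) q(d+1−m)) < 1. Then there is a constant c depending only on d such that for every u > 0, limsup_{N→∞} sup_{j∈ℤ, A∈A^j_m} |A|^{−1} log E[exp(λ Σ_{x∈A} 1{H_x ≤ D^j_{uN^{d−1}}})] ≤ c u (e^λ − 1)/(1 − χ(λ)). -/

import Mathlib

open MeasureTheory Filter
open scoped ENNReal Classical

namespace DiscCyl

/-- The lattice `ℤ^{d+1}`. -/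
abbrev Lat (d : ℕ) := Fin (d + 1) → ℤ

/-- The discrete cylinder `E = (ℤ/Nℤ)^d × ℤ`. -/
abbrev Cyl (d N : ℕ) := (Fin d → ZMod N) × ℤ

instance (N : ℕ) : MeasurableSpace (ZMod N) := ⊤

instance (N : ℕ) : Countable (ZMod N) := by
  cases N with
  | zero => exact inferInstanceAs (Countable ℤ)
  | succ n => exact inferInstanceAs (Countable (Fin (n + 1)))

/-- The canonical projection `π_E : ℤ^{d+1} → E`. -/
def projE (d N : ℕ) (v : Lat d) : Cyl d N :=
  (fun i => (v i.castSucc : ZMod N), v (Fin.last d))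

/-- The `2(d+1)` unit vectors `±e_i` of `ℤ^{d+1}`. -/
def unitVecs (d : ℕ) : Finset (Lat d) :=
  Finset.image (fun p : Fin (d + 1) × Bool => Pi.single p.1 (if p.2 then (1 : ℤ) else -1))
    Finset.univ

/-- One-step transition probability of simple random walk on the cylinder:
each of the `2(d+1)` unit moves of `ℤ^{d+1}` is taken with probability `1/(2(d+1))`
and projected to `E`. -/
noncomputable def stepProb (d N : ℕ) (x y : Cyl d N) : ℝ≥0∞ :=
  (((unitVecs d).filter fun e => x + projE d N e = y).card : ℝ≥0∞) / (2 * (d + 1))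

/-- `Pl` is the family of laws (indexed by the starting point) of simple random walk
on the cylinder `E = (ℤ/Nℤ)^d × ℤ`. -/
def IsCylRW (d N : ℕ) (Pl : Cyl d N → Measure (ℕ → Cyl d N)) : Prop :=
  (∀ x, IsProbabilityMeasure (Pl x)) ∧
    ∀ (x : Cyl d N) (n : ℕ) (γ : ℕ → Cyl d N),
      Pl x {ω | ∀ i ≤ n, ω i = γ i} =
        (if γ 0 = x then 1 else 0) * ∏ i ∈ Finset.range n, stepProb d N (γ i) (γ (i + 1))

/-- The lattice `ℤ^ν`. -/
abbrev ZLat (ν : ℕ) := Fin ν → ℤ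

/-- Unit vectors of `ℤ^ν`. -/
def zUnitVecs (ν : ℕ) : Set (ZLat ν) :=
  {v | ∃ i, v = Pi.single i 1 ∨ v = Pi.single i (-1)}

/-- One-step transition probability of simple random walk on `ℤ^ν`. -/
noncomputable def zStep (ν : ℕ) (x y : ZLat ν) : ℝ≥0∞ :=
  if y - x ∈ zUnitVecs ν then (2 * ν : ℝ≥0∞)⁻¹ else 0

/-- `Ql` is the family of laws of simple random walk on `ℤ^ν`. -/
def IsLatRW (ν : ℕ) (Ql : ZLat ν → Measure (ℕ → ZLat ν)) : Prop :=
  (∀ x, IsProbabilityMeasure (Ql x)) ∧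
    ∀ (x : ZLat ν) (n : ℕ) (γ : ℕ → ZLat ν),
      Ql x {ω | ∀ i ≤ n, ω i = γ i} =
        (if γ 0 = x then 1 else 0) * ∏ i ∈ Finset.range n, zStep ν (γ i) (γ (i + 1))

/-- `q(ν)`: the return probability to the origin of simple random walk on `ℤ^ν`. -/
noncomputable def retProb (ν : ℕ) (Ql : ZLat ν → Measure (ℕ → ZLat ν)) : ℝ :=
  ((Ql 0) {ω | ∃ n : ℕ, 1 ≤ n ∧ ω n = 0}).toReal

/-- Entrance time `H_U` (with value `⊤` if `U` is never entered). -/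
noncomputable def entT {X : Type*} (U : Set X) (ω : ℕ → X) : ℕ∞ :=
  sInf {t : ℕ∞ | ∃ n : ℕ, ω n ∈ U ∧ t = n}

/-- Exit time `T_U`. -/
noncomputable def exitT {X : Type*} (U : Set X) (ω : ℕ → X) : ℕ∞ :=
  entT Uᶜ ω

/-- `after t f ω = t + f (θ_t ω)`, with value `⊤` when `t = ⊤`. -/
noncomputable def after {X : Type*} (t : ℕ∞) (f : (ℕ → X) → ℕ∞) (ω : ℕ → X) : ℕ∞ :=
  t.recTopCoe ⊤ fun m => (m : ℕ∞) + f fun k => ω (k + m)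

/-- The block `C_j = (ℤ/Nℤ)^d × ([(j-3/4)N, (j+3/4)N] ∩ ℤ)`. -/
def Cblk (d N : ℕ) (j : ℤ) : Set (Cyl d N) :=
  {x | ((j : ℝ) - 3 / 4) * N ≤ (x.2 : ℝ) ∧ (x.2 : ℝ) ≤ ((j : ℝ) + 3 / 4) * N}

/-- The block `B_j = (ℤ/Nℤ)^d × [(j-1)N, (j+1)N]`. -/
def Bblk (d N : ℕ) (j : ℤ) : Set (Cyl d N) :=
  {x | (j - 1) * (N : ℤ) ≤ x.2 ∧ x.2 ≤ (j + 1) * (N : ℤ)}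

/-- The block `B̃_j = (ℤ/Nℤ)^d × [(j-2)N+1, (j+2)N-1]`. -/
def Btl (d N : ℕ) (j : ℤ) : Set (Cyl d N) :=
  {x | (j - 2) * (N : ℤ) + 1 ≤ x.2 ∧ x.2 ≤ (j + 2) * (N : ℤ) - 1}

/-- `D^j_1`: time of the first departure from `B̃_j` after the first return to `B_j`. -/
noncomputable def oneExc (d N : ℕ) (j : ℤ) (ω : ℕ → Cyl d N) : ℕ∞ :=
  after (entT (Bblk d N j) ω) (exitT (Btl d N j)) ω

/-- `D^j_k`: time of the `k`-th departure from `B̃_j` (after successive returns to `B_j`). -/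
noncomputable def DD (d N : ℕ) (j : ℤ) : ℕ → (ℕ → Cyl d N) → ℕ∞
  | 0, _ => 0
  | k + 1, ω => after (DD d N j k ω) (oneExc d N j) ω

/-- The law `P` of the walk with initial distribution uniform on `B_0`. -/
noncomputable def lawP (d N : ℕ) (Pl : Cyl d N → Measure (ℕ → Cyl d N)) :
    Measure (ℕ → Cyl d N) :=
  ((N : ℝ≥0∞) ^ d * (2 * N + 1))⁻¹ •
    Measure.sum fun x : Cyl d N => if x ∈ Bblk d N 0 then Pl x else 0

/-- Nearest-neighbour adjacency on the cylinder. -/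
def adj (d N : ℕ) (x y : Cyl d N) : Prop :=
  x ≠ y ∧ ∃ e ∈ unitVecs d, y = x + projE d N e

/-- `x` and `y` are connected by a nearest-neighbour path inside `S`. -/
def connIn (d N : ℕ) (S : Set (Cyl d N)) (x y : Cyl d N) : Prop :=
  Relation.ReflTransGen (fun a b => a ∈ S ∧ b ∈ S ∧ adj d N a b) x y

/-- `S` is a connected set. -/
def IsConnIn (d N : ℕ) (S : Set (Cyl d N)) : Prop :=
  ∀ x ∈ S, ∀ y ∈ S, connIn d N S x y

/-- The boundary `∂U`. -/
def bdry (d N : ℕ) (U : Set (Cyl d N)) : Set (Cyl d N) :=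
  {x | x ∉ U ∧ ∃ y ∈ U, adj d N x y}

/-- `ℓ^∞`-norm on `ℤ^{d+1}`. -/
def linf {d : ℕ} (v : Lat d) : ℕ := Finset.univ.sup fun i => (v i).natAbs

/-- `ℓ^∞`-distance induced on the cylinder. -/
noncomputable def cylDist (d N : ℕ) (x y : Cyl d N) : ℕ :=
  sInf {r : ℕ | ∃ v : Lat d, projE d N v = y - x ∧ linf v = r}

/-- `S` has `ℓ^∞`-diameter at least `L`. -/
def diamGE (d N : ℕ) (S : Set (Cyl d N)) (L : ℕ) : Prop :=
  ∃ x ∈ S, ∃ y ∈ S, L ≤ cylDist d N x y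

/-- `X_{[0,n]}`: the set of points visited up to time `n`. -/
def ran {X : Type*} (ω : ℕ → X) (n : ℕ) : Set X := {y | ∃ i ≤ n, ω i = y}

/-- The set of points visited up to the (possibly infinite) time `t`. -/
def ranE {X : Type*} (ω : ℕ → X) (t : ℕ∞) : Set X :=
  {y | ∃ i : ℕ, (i : ℕ∞) ≤ t ∧ ω i = y}

/-- `L_m`: projections to `E` of `m`-dimensional affine coordinate lattices of `ℤ^{d+1}`. -/
def Lcoll (d N m : ℕ) : Set (Set (Cyl d N)) :=
  {F | ∃ I : Finset (Fin (d + 1)), I.card = m ∧ ∃ y : Lat d,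
      F = (fun v => projE d N (y + v)) '' {v : Lat d | ∀ i ∉ I, v i = 0}}

/-- `A^j_m`: nonempty subsets of `C_j` contained in some `F ∈ L_m`. -/
def Adm (d N : ℕ) (j : ℤ) (m : ℕ) : Set (Finset (Cyl d N)) :=
  {A | A.Nonempty ∧ ↑A ⊆ Cblk d N j ∧ ∃ F ∈ Lcoll d N m, (↑A : Set (Cyl d N)) ⊆ F}

/-- The segment `{x + k·e : 0 ≤ k ≤ L}` (addition via `π_E`). -/
def segment (d N : ℕ) (x : Cyl d N) (e : Lat d) (L : ℕ) : Set (Cyl d N) :=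
  {y | ∃ k : ℕ, k ≤ L ∧ y = x + projE d N ((k : ℤ) • e)}

/-- The event `V_{K,j,t}` (with `k = ⌊t⌋` excursions). -/
def Vev (d N : ℕ) (K : ℝ) (j : ℤ) (k : ℕ) : Set (ℕ → Cyl d N) :=
  {ω | ∀ x ∈ Cblk d N j, ∀ e ∈ unitVecs d, ∃ i : ℕ, (i : ℝ) < Real.sqrt N ∧
      ∀ l : ℕ, i ≤ l → l ≤ i + ⌊K * Real.log N⌋₊ →
        x + projE d N ((l : ℤ) • e) ∉ ranE ω (DD d N j k ω)}

/-- The event `U_{K,j,t}` (with `k = ⌊t⌋` excursions). -/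
def Uev (d N : ℕ) (K : ℝ) (j : ℤ) (k : ℕ) : Set (ℕ → Cyl d N) :=
  {ω | ∀ F ∈ Lcoll d N 2, ∀ n : ℕ, (n : ℕ∞) ≤ DD d N j k ω →
      ∀ O₁ O₂ : Set (Cyl d N),
        O₁ ⊆ (F ∩ Cblk d N j) \ ran ω n → O₂ ⊆ (F ∩ Cblk d N j) \ ran ω n →
        IsConnIn d N O₁ → IsConnIn d N O₂ →
        diamGE d N O₁ ⌊K * Real.log N⌋₊ → diamGE d N O₂ ⌊K * Real.log N⌋₊ →
        ∀ p ∈ O₁, ∀ q ∈ O₂, connIn d N ((F ∩ Cblk d N j) \ ran ω n) p q}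

/-- A (finite) set `S` disconnects the cylinder. -/
def Disconnects (d N : ℕ) (S : Set (Cyl d N)) : Prop :=
  S.Finite ∧ ∃ M₀ : ℕ, ∀ M : ℕ, M₀ ≤ M → ∀ x y : Cyl d N,
    (M : ℤ) ≤ x.2 → y.2 ≤ -(M : ℤ) → ¬ connIn d N Sᶜ x y

/-- The disconnection time `T_N`. -/
noncomputable def discT (d N : ℕ) (ω : ℕ → Cyl d N) : ℕ∞ :=
  sInf {t : ℕ∞ | ∃ n : ℕ, Disconnects d N (ran ω n) ∧ t = n}

/-- `r ≤ t` for `t : ℕ∞` and a real threshold `r` (trivially true when `t = ⊤`). -/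
def geReal (t : ℕ∞) (r : ℝ) : Prop := ∀ n : ℕ, t = (n : ℕ∞) → r ≤ n

/-- `r < t` for `t : ℕ∞` and a real threshold `r` (trivially true when `t = ⊤`). -/
def gtReal (t : ℕ∞) (r : ℝ) : Prop := ∀ n : ℕ, t = (n : ℕ∞) → r < n

/-- `φ_j(z) = E_z[exp(λ Σ_{x∈A} 1{H_x < T_{B̃_j}})]`. -/
noncomputable def phi (d N : ℕ) (Pl : Cyl d N → Measure (ℕ → Cyl d N)) (j : ℤ) (lam : ℝ)
    (A : Finset (Cyl d N)) (z : Cyl d N) : ℝ :=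
  ∫ ω, Real.exp (lam * ∑ x ∈ A, if entT {x} ω < exitT (Btl d N j) ω then (1 : ℝ) else 0)
    ∂(Pl z)

/-- `‖φ_j‖_∞`. -/
noncomputable def phiSup (d N : ℕ) (Pl : Cyl d N → Measure (ℕ → Cyl d N)) (j : ℤ) (lam : ℝ)
    (A : Finset (Cyl d N)) : ℝ :=
  ⨆ z : Cyl d N, phi d N Pl j lam A z

/-- `q_N = sup {P_z[H_F < T_{B̃_j}] : F ∈ L_m, z ∈ ∂F}`. -/
noncomputable def qNval (d N m : ℕ) (Pl : Cyl d N → Measure (ℕ → Cyl d N)) (j : ℤ) : ℝ :=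
  sSup {r : ℝ | ∃ F ∈ Lcoll d N m, ∃ z ∈ bdry d N F,
      r = ((Pl z) {ω | entT F ω < exitT (Btl d N j) ω}).toReal}

/-- The times `τ_k`: `τ_0` is the entrance time of `(ℤ/Nℤ)^d × Nℤ`, and `τ_{k+1}` is the
first time after `τ_k` at which the vertical component has moved by exactly `N`. -/
noncomputable def tauT (d N : ℕ) : ℕ → (ℕ → Cyl d N) → ℕ∞
  | 0, ω => entT {x : Cyl d N | (N : ℤ) ∣ x.2} ω
  | k + 1, ω =>
      (tauT d N k ω).recTopCoe ⊤ fun m =>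
        sInf {t : ℕ∞ | ∃ n : ℕ, m < n ∧ ((ω n).2 - (ω m).2).natAbs = N ∧ t = n}

/-- `*`-adjacency on `ℤ²`. -/
def starAdj (x y : ℤ × ℤ) : Prop :=
  x ≠ y ∧ (x.1 - y.1).natAbs ≤ 1 ∧ (x.2 - y.2).natAbs ≤ 1


/-! ### Part A: the Markov property at time one -/

/-- Prepend a point to a path. -/
def consP {X : Type*} (x : X) (ω : ℕ → X) : ℕ → X
  | 0 => x
  | n + 1 => ω n

lemma measurable_consP {X : Type*} [MeasurableSpace X] (x : X) :
    Measurable (consP x : (ℕ → X) → (ℕ → X)) := by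
  refine measurable_pi_lambda _ fun n => ?_
  cases n with
  | zero => exact measurable_const
  | succ n => exact measurable_pi_apply n

/-- The cylinder sets. -/
def cylSets (X : Type*) : Set (Set (ℕ → X)) :=
  {S | ∃ (n : ℕ) (γ : ℕ → X), S = {ω | ∀ i ≤ n, ω i = γ i}}

lemma cylSets_pi (X : Type*) : IsPiSystem (cylSets X) := by
  rintro _ ⟨n, γ, rfl⟩ _ ⟨n', γ', rfl⟩ ⟨ω₀, h1, h2⟩
  refine ⟨max n n', ω₀, ?_⟩
  ext ω
  simp only [Set.mem_inter_iff, Set.mem_ofPred_eq] at *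
  constructor
  · rintro ⟨ha, hb⟩ i hi
    rcases le_max_iff.1 hi with h | h
    · rw [ha i h, h1 i h]
    · rw [hb i h, h2 i h]
  · intro h
    exact ⟨fun i hi => by rw [h i (le_max_of_le_left hi), h1 i hi],
      fun i hi => by rw [h i (le_max_of_le_right hi), h2 i hi]⟩

lemma measurableSet_cyl {X : Type*} [MeasurableSpace X] [MeasurableSingletonClass X]
    (n : ℕ) (γ : ℕ → X) : MeasurableSet {ω : ℕ → X | ∀ i ≤ n, ω i = γ i} := by
  have : {ω : ℕ → X | ∀ i ≤ n, ω i = γ i} = ⋂ i, ⋂ (_ : i ≤ n), (fun ω => ω i) ⁻¹' {γ i} := by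
    ext ω; simp
  rw [this]
  exact MeasurableSet.iInter fun i => MeasurableSet.iInter fun _ =>
    measurable_pi_apply i (measurableSet_singleton _)

lemma cylSets_gen (X : Type*) [MeasurableSpace X] [MeasurableSingletonClass X] [Countable X]
    [Nonempty X] :
    (MeasurableSpace.pi : MeasurableSpace (ℕ → X)) = MeasurableSpace.generateFrom (cylSets X) := by
  apply le_antisymm
  · refine iSup_le fun k => ?_
    rintro _ ⟨s, hs, rfl⟩
    let x0 : X := Classical.arbitrary X
    have : (fun ω : ℕ → X => ω k) ⁻¹' s =
        ⋃ g : {g : Fin (k + 1) → X // g (Fin.last k) ∈ s},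
          {ω : ℕ → X | ∀ i ≤ k, ω i = if h : i < k + 1 then g.1 ⟨i, h⟩ else x0} := by
      ext ω
      simp only [Set.mem_preimage, Set.mem_iUnion, Set.mem_ofPred_eq]
      constructor
      · intro h
        refine ⟨⟨fun i => ω i, by simpa using h⟩, fun i hi => ?_⟩
        simp [Nat.lt_succ_of_le hi]
      · rintro ⟨⟨g, hg⟩, h⟩
        have := h k le_rfl
        simp only [lt_add_iff_pos_right, Nat.lt_one_iff, pos_of_gt, dite_true] at this
        rw [this]; simpa [Fin.last] using hg
    rw [this]
    refine @MeasurableSet.iUnion _ _ (_) _ _ fun g => ?_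
    exact MeasurableSpace.measurableSet_generateFrom ⟨k, _, rfl⟩
  · refine MeasurableSpace.generateFrom_le ?_
    rintro _ ⟨n, γ, rfl⟩
    exact measurableSet_cyl n γ

/-- First-step decomposition of the laws of a Markov chain given by cylinder probabilities. -/
lemma law_first_step {X : Type*} [MeasurableSpace X] [MeasurableSingletonClass X] [Countable X]
    (p : X → X → ℝ≥0∞) (L : X → Measure (ℕ → X)) (hL : ∀ x, IsProbabilityMeasure (L x))
    (hcyl : ∀ (x : X) (n : ℕ) (γ : ℕ → X), L x {ω | ∀ i ≤ n, ω i = γ i} =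
        (if γ 0 = x then 1 else 0) * ∏ i ∈ Finset.range n, p (γ i) (γ (i + 1))) (x : X) :
    L x = Measure.sum fun y => p x y • (L y).map (consP x) := by
  have : Nonempty X := ⟨x⟩
  have key : ∀ (n : ℕ) (γ : ℕ → X), L x {ω | ∀ i ≤ n + 1, ω i = γ i} =
      (Measure.sum fun y => p x y • (L y).map (consP x)) {ω | ∀ i ≤ n + 1, ω i = γ i} := by
    intro n γ
    rw [Measure.sum_apply _ (measurableSet_cyl _ _), hcyl, Finset.prod_range_succ']
    by_cases h0 : γ 0 = x
    · have : ∀ y, (p x y • (L y).map (consP x)) {ω | ∀ i ≤ n + 1, ω i = γ i} =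
          if y = γ 1 then p x (γ 1) * ∏ i ∈ Finset.range n, p (γ (i + 1)) (γ (i + 1 + 1)) else 0 := by
        intro y
        rw [Measure.smul_apply, Measure.map_apply (measurable_consP x) (measurableSet_cyl _ _)]
        have : consP x ⁻¹' {ω | ∀ i ≤ n + 1, ω i = γ i} = {ω | ∀ i ≤ n, ω i = (fun i => γ (i + 1)) i} := by
          ext ω
          simp only [Set.mem_preimage, Set.mem_ofPred_eq]
          constructor
          · intro h i hi; exact h (i + 1) (by omega)
          · intro h i hi
            cases i with
            | zero => exact h0.symm
            | succ i => exact h i (by omega)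
        rw [this, hcyl]
        by_cases hy : y = γ 1
        · subst hy; simp
        · simp [hy, Ne.symm hy]
      simp_rw [this]
      rw [tsum_ite_eq]
      simp [h0, mul_comm]
    · have : ∀ y, (p x y • (L y).map (consP x)) {ω | ∀ i ≤ n + 1, ω i = γ i} = 0 := by
        intro y
        rw [Measure.smul_apply, Measure.map_apply (measurable_consP x) (measurableSet_cyl _ _)]
        have : consP x ⁻¹' {ω | ∀ i ≤ n + 1, ω i = γ i} = ∅ := by
          ext ω
          simp only [Set.mem_preimage, Set.mem_ofPred_eq, Set.mem_empty_iff_false, iff_false]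
          intro h; exact h0 (h 0 (by omega)).symm
        rw [this]; simp
      simp [this, h0]
  have key0 : ∀ γ : ℕ → X, L x {ω | ∀ i ≤ 0, ω i = γ i} =
      (Measure.sum fun y => p x y • (L y).map (consP x)) {ω | ∀ i ≤ 0, ω i = γ i} := by
    intro γ
    have hU : {ω : ℕ → X | ∀ i ≤ 0, ω i = γ i} =
        ⋃ y : X, {ω | ∀ i ≤ 0 + 1, ω i = (fun j => if j = 0 then γ 0 else y) i} := by
      ext ω
      simp only [Set.mem_iUnion, Set.mem_ofPred_eq]
      constructor
      · intro h
        refine ⟨ω 1, fun i hi => ?_⟩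
        interval_cases i
        · simpa using h 0 le_rfl
        · simp
      · rintro ⟨y, h⟩ i hi
        interval_cases i
        simpa using h 0 (by omega)
    have hd : Pairwise (Function.onFun Disjoint
        fun y : X => {ω : ℕ → X | ∀ i ≤ 0 + 1, ω i = (fun j => if j = 0 then γ 0 else y) i}) := by
      intro y z hyz
      refine Set.disjoint_left.2 fun ω h1 h2 => hyz ?_
      have a := h1 1 (by omega); have b := h2 1 (by omega)
      simp at a b; rw [← a, ← b]
    rw [hU, measure_iUnion hd fun y => measurableSet_cyl _ _,
      measure_iUnion hd fun y => measurableSet_cyl _ _]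
    exact tsum_congr fun y => key 0 _
  refine Measure.ext_of_generateFrom_of_cover_subset (S := cylSets X)
    (T := Set.range fun y : X => {ω : ℕ → X | ∀ i ≤ 0, ω i = (fun _ => y) i})
    (cylSets_gen X) (cylSets_pi X) ?_ (Set.countable_range _) ?_ ?_ ?_
  · rintro _ ⟨y, rfl⟩; exact ⟨0, _, rfl⟩
  · ext ω; simp
  · rintro _ ⟨y, rfl⟩
    have := hL x
    exact measure_ne_top _ _
  · rintro _ ⟨n, γ, rfl⟩
    cases n with
    | zero => exact key0 γ
    | succ n => exact key n γ

lemma lintegral_first_step_le {X : Type*} [MeasurableSpace X] [MeasurableSingletonClass X]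
    [Countable X]
    (p : X → X → ℝ≥0∞) (L : X → Measure (ℕ → X)) (hL : ∀ x, IsProbabilityMeasure (L x))
    (hcyl : ∀ (x : X) (n : ℕ) (γ : ℕ → X), L x {ω | ∀ i ≤ n, ω i = γ i} =
        (if γ 0 = x then 1 else 0) * ∏ i ∈ Finset.range n, p (γ i) (γ (i + 1))) (x : X)
    (F : (ℕ → X) → ℝ≥0∞) :
    ∫⁻ ω, F ω ∂(L x) ≤ ∑' y, p x y * ∫⁻ ω, F (consP x ω) ∂(L y) := by
  rw [law_first_step p L hL hcyl x, lintegral_sum_measure]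
  refine ENNReal.tsum_le_tsum fun y => ?_
  rw [lintegral_smul_measure, smul_eq_mul]
  exact mul_le_mul_right (lintegral_map_le F (consP x)) _

lemma measure_first_step {X : Type*} [MeasurableSpace X] [MeasurableSingletonClass X]
    [Countable X]
    (p : X → X → ℝ≥0∞) (L : X → Measure (ℕ → X)) (hL : ∀ x, IsProbabilityMeasure (L x))
    (hcyl : ∀ (x : X) (n : ℕ) (γ : ℕ → X), L x {ω | ∀ i ≤ n, ω i = γ i} =
        (if γ 0 = x then 1 else 0) * ∏ i ∈ Finset.range n, p (γ i) (γ (i + 1))) (x : X)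
    (S : Set (ℕ → X)) (hS : MeasurableSet S) :
    L x S = ∑' y, p x y * L y (consP x ⁻¹' S) := by
  conv_lhs => rw [law_first_step p L hL hcyl x]
  rw [Measure.sum_apply _ hS]
  refine tsum_congr fun y => ?_
  rw [Measure.smul_apply, Measure.map_apply (measurable_consP x) hS, smul_eq_mul]

lemma law_start {X : Type*} [MeasurableSpace X] [MeasurableSingletonClass X]
    (p : X → X → ℝ≥0∞) (L : X → Measure (ℕ → X)) (hL : ∀ x, IsProbabilityMeasure (L x))
    (hcyl : ∀ (x : X) (n : ℕ) (γ : ℕ → X), L x {ω | ∀ i ≤ n, ω i = γ i} =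
        (if γ 0 = x then 1 else 0) * ∏ i ∈ Finset.range n, p (γ i) (γ (i + 1))) (x : X) :
    ∀ᵐ ω ∂(L x), ω 0 = x := by
  have := hL x
  have h := hcyl x 0 (fun _ => x)
  simp only [nonpos_iff_eq_zero, forall_eq, if_true, Finset.range_zero, Finset.prod_empty,
    mul_one] at h
  have hm : MeasurableSet {ω : ℕ → X | ω 0 = x} :=
    (measurable_pi_apply (X := fun _ : ℕ => X) 0) (measurableSet_singleton x)
  rw [ae_iff]
  have := (prob_compl_eq_zero_iff hm).2 h
  exact this

/-! The unit vectors of the cylinder -/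

/-- averaging over the `2(d+1)` neighbours, real valued -/
noncomputable def Pav (d N : ℕ) (f : Cyl d N → ℝ) (z : Cyl d N) : ℝ :=
  (∑ i : Fin (d + 1), (f (z + projE d N (Pi.single i 1)) + f (z + projE d N (Pi.single i (-1)))))
    / (2 * (d + 1))

lemma unitVecs_sum {M : Type*} [AddCommMonoid M] (d : ℕ) (f : Lat d → M) :
    ∑ e ∈ unitVecs d, f e = ∑ i : Fin (d + 1), (f (Pi.single i 1) + f (Pi.single i (-1))) := by
  unfold unitVecs
  rw [Finset.sum_image]
  · rw [Fintype.sum_prod_type]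
    simp
  · rintro ⟨i, a⟩ _ ⟨j, b⟩ _ h
    simp only at h
    have hne : ∀ c : Bool, (if c then (1 : ℤ) else -1) ≠ 0 := by intro c; cases c <;> simp
    have hij : i = j := by
      by_contra hij
      have := congrFun h i
      rw [Pi.single_eq_same, Pi.single_eq_of_ne hij] at this
      exact hne a this
    subst hij
    have := congrFun h i
    rw [Pi.single_eq_same, Pi.single_eq_same] at this
    cases a <;> cases b <;> simp at this ⊢

instance (N : ℕ) : MeasurableSingletonClass (ZMod N) := ⟨fun _ => trivial⟩

lemma stepProb_tsum (d N : ℕ) (x : Cyl d N) (Φ : Cyl d N → ℝ≥0∞) :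
    ∑' y, stepProb d N x y * Φ y = (∑ e ∈ unitVecs d, Φ (x + projE d N e)) / (2 * (d + 1)) := by
  have : ∀ y, stepProb d N x y * Φ y =
      (∑ e ∈ unitVecs d, if y = x + projE d N e then Φ y else 0) / (2 * (d + 1)) := by
    intro y
    unfold stepProb
    rw [Finset.card_filter]
    push_cast
    rw [ENNReal.mul_div_right_comm.symm, Finset.sum_mul]
    congr 1
    refine Finset.sum_congr rfl fun e _ => ?_
    by_cases h : x + projE d N e = y
    · simp [h]
    · simp [h, Ne.symm h]
  simp_rw [this, div_eq_mul_inv]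
  rw [ENNReal.tsum_mul_right, Summable.tsum_finsetSum (fun _ _ => ENNReal.summable)]
  congr 1
  refine Finset.sum_congr rfl fun e _ => ?_
  exact tsum_ite_eq _ _

lemma IsCylRW.cyl {d N : ℕ} {Pl : Cyl d N → Measure (ℕ → Cyl d N)} (h : IsCylRW d N Pl) :
    ∀ (x : Cyl d N) (n : ℕ) (γ : ℕ → Cyl d N), Pl x {ω | ∀ i ≤ n, ω i = γ i} =
        @ite _ (γ 0 = x) (Classical.propDecidable _) 1 0 *
          ∏ i ∈ Finset.range n, stepProb d N (γ i) (γ (i + 1)) := by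
  intro x n γ
  rw [h.2 x n γ]
  congr

/-- the one-step bound, in the form used below -/
lemma step_le {d N : ℕ} {Pl : Cyl d N → Measure (ℕ → Cyl d N)} (h : IsCylRW d N Pl)
    (x : Cyl d N) (F G : (ℕ → Cyl d N) → ℝ≥0∞) (hFG : ∀ ω, F (consP x ω) ≤ G ω)
    (φ : Cyl d N → ℝ)
    (hφ : ∀ i : Fin (d + 1), ∀ s : ℤ, (s = 1 ∨ s = -1) →
      0 ≤ φ (x + projE d N (Pi.single i s)) ∧
      ∫⁻ ω, G ω ∂(Pl (x + projE d N (Pi.single i s))) ≤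
        ENNReal.ofReal (φ (x + projE d N (Pi.single i s)))) :
    ∫⁻ ω, F ω ∂(Pl x) ≤ ENNReal.ofReal (Pav d N φ x) := by
  refine (lintegral_first_step_le (stepProb d N) Pl h.1 h.cyl x F).trans ?_
  rw [stepProb_tsum, unitVecs_sum]
  unfold Pav
  rw [ENNReal.ofReal_div_of_pos (by positivity)]
  have : ENNReal.ofReal (2 * ((d : ℝ) + 1)) = 2 * ((d : ℝ≥0∞) + 1) := by
    rw [ENNReal.ofReal_mul (by norm_num), ENNReal.ofReal_add (by positivity) (by norm_num)]
    simp
  rw [this]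
  gcongr
  rw [ENNReal.ofReal_sum_of_nonneg
    (fun i _ => add_nonneg (hφ i 1 (Or.inl rfl)).1 (hφ i (-1) (Or.inr rfl)).1)]
  refine Finset.sum_le_sum fun i _ => ?_
  rw [ENNReal.ofReal_add (hφ i 1 (Or.inl rfl)).1 (hφ i (-1) (Or.inr rfl)).1]
  gcongr
  · exact (lintegral_mono fun ω => hFG ω).trans (hφ i 1 (Or.inl rfl)).2
  · exact (lintegral_mono fun ω => hFG ω).trans (hφ i (-1) (Or.inr rfl)).2

/-! ### Part B: hitting probabilities for the lattice walk -/

lemma mem_zUnitVecs (k : ℕ) (v : ZLat (k + 1)) : v ∈ zUnitVecs (k + 1) ↔ v ∈ unitVecs k := by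
  unfold zUnitVecs unitVecs
  simp only [Set.mem_ofPred_eq, Finset.mem_image, Finset.mem_univ, true_and, Prod.exists,
    Bool.exists_bool]
  constructor
  · rintro ⟨i, h | h⟩
    · exact ⟨i, Or.inr (by simp [h])⟩
    · exact ⟨i, Or.inl (by simp [h])⟩
  · rintro ⟨i, h | h⟩
    · exact ⟨i, Or.inr (by simp [← h])⟩
    · exact ⟨i, Or.inl (by simp [← h])⟩

lemma zStep_tsum (k : ℕ) (x : ZLat (k + 1)) (Φ : ZLat (k + 1) → ℝ≥0∞) :
    ∑' y, zStep (k + 1) x y * Φ y =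
      (∑ i, (Φ (x + Pi.single i 1) + Φ (x + Pi.single i (-1)))) / (2 * ((k + 1 : ℕ) : ℝ≥0∞)) := by
  rw [← unitVecs_sum k (fun e => Φ (x + e))]
  have : ∀ y, zStep (k + 1) x y * Φ y =
      (∑ e ∈ unitVecs k, if y = x + e then Φ y else 0) * (2 * ((k + 1 : ℕ) : ℝ≥0∞))⁻¹ := by
    intro y
    unfold zStep
    by_cases h : y - x ∈ zUnitVecs (k + 1)
    · rw [if_pos h]
      rw [mem_zUnitVecs] at h
      rw [Finset.sum_eq_single_of_mem _ h]
      · simp [mul_comm]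
      · intro b _ hb
        rw [if_neg]
        intro h'; apply hb; rw [h']; simp
    · rw [if_neg h]
      rw [mem_zUnitVecs] at h
      rw [Finset.sum_eq_zero]
      · simp
      · intro e he
        rw [if_neg]
        intro h'; apply h; rw [h']; simpa using he
  simp_rw [this]
  rw [ENNReal.tsum_mul_right, Summable.tsum_finsetSum (fun _ _ => ENNReal.summable), div_eq_mul_inv]
  congr 1
  refine Finset.sum_congr rfl fun e _ => ?_
  exact tsum_ite_eq _ _

lemma exists_hit (k : ℕ) (Q : ZLat (k + 1) → Measure (ℕ → ZLat (k + 1)))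
    (hQ : IsLatRW (k + 1) Q) :
    ∃ v : ZLat (k + 1) → ℝ, (∀ y, 0 ≤ v y) ∧ v 0 = 1 ∧
      (∀ y, y ≠ 0 → (∑ i, (v (y + Pi.single i 1) + v (y + Pi.single i (-1)))) /
        (2 * ((k : ℝ) + 1)) = v y) ∧
      (∑ i, (v (Pi.single i 1) + v (Pi.single i (-1)))) / (2 * ((k : ℝ) + 1)) =
        retProb (k + 1) Q := by
  have hcyl : ∀ (x : ZLat (k + 1)) (n : ℕ) (γ : ℕ → ZLat (k + 1)),
      Q x {ω | ∀ i ≤ n, ω i = γ i} = @ite _ (γ 0 = x) (Classical.propDecidable _) 1 0 *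
          ∏ i ∈ Finset.range n, zStep (k + 1) (γ i) (γ (i + 1)) := by
    intro x n γ
    rw [hQ.2 x n γ]
    congr
  have hmn : ∀ n : ℕ, MeasurableSet {ω : ℕ → ZLat (k + 1) | ω n = 0} := fun n =>
    (measurable_pi_apply (X := fun _ : ℕ => ZLat (k + 1)) n) (measurableSet_singleton 0)
  have hm1 : MeasurableSet {ω : ℕ → ZLat (k + 1) | ∃ n, ω n = 0} := by
    have : {ω : ℕ → ZLat (k + 1) | ∃ n, ω n = 0} = ⋃ n, {ω | ω n = 0} := by ext; simp
    rw [this]; exact MeasurableSet.iUnion hmn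
  have hm2 : MeasurableSet {ω : ℕ → ZLat (k + 1) | ∃ n, 1 ≤ n ∧ ω n = 0} := by
    have : {ω : ℕ → ZLat (k + 1) | ∃ n, 1 ≤ n ∧ ω n = 0} = ⋃ n, {ω | ω (n + 1) = 0} := by
      ext ω
      simp only [Set.mem_ofPred_eq, Set.mem_iUnion]
      constructor
      · rintro ⟨n, hn, h⟩; exact ⟨n - 1, by rwa [Nat.sub_add_cancel hn]⟩
      · rintro ⟨n, h⟩; exact ⟨n + 1, by omega, h⟩
    rw [this]; exact MeasurableSet.iUnion fun n => hmn (n + 1)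
  set HS : Set (ℕ → ZLat (k + 1)) := {ω | ∃ n, ω n = 0} with hHS
  set RS : Set (ℕ → ZLat (k + 1)) := {ω | ∃ n, 1 ≤ n ∧ ω n = 0} with hRS
  have hfin : ∀ x S, Q x S ≠ ⊤ := fun x S => by
    have := hQ.1 x
    exact measure_ne_top _ _
  have hstep : ∀ x S, (∀ ω, ω ∈ HS ↔ consP x ω ∈ S) → MeasurableSet S → 
      (∑ i, ((Q (x + Pi.single i 1) HS).toReal + (Q (x + Pi.single i (-1)) HS).toReal)) /
        (2 * ((k : ℝ) + 1)) = (Q x S).toReal := by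
    intro x S h hS
    rw [measure_first_step (zStep (k + 1)) Q hQ.1 hcyl x S hS]
    have : consP x ⁻¹' S = HS := by ext ω; exact (h ω).symm
    rw [this, zStep_tsum k x (fun y => Q y HS), ENNReal.toReal_div, ENNReal.toReal_sum]
    · congr 1
      · refine Finset.sum_congr rfl fun i _ => ?_
        rw [ENNReal.toReal_add (hfin _ _) (hfin _ _)]
      · rw [ENNReal.toReal_mul, ENNReal.toReal_natCast]
        simp
    · intro i _
      exact ENNReal.add_ne_top.2 ⟨hfin _ _, hfin _ _⟩
  refine ⟨fun y => (Q y HS).toReal, fun y => ENNReal.toReal_nonneg, ?_, ?_, ?_⟩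
  · have := hQ.1 0
    have h0 := law_start (zStep (k + 1)) Q hQ.1 hcyl 0
    have : Q 0 HS = 1 := by
      refine (mem_ae_iff_prob_eq_one hm1).1 ?_
      filter_upwards [h0] with ω hω
      exact ⟨0, hω⟩
    simp [this]
  · intro y hy
    refine hstep y HS (fun ω => ?_) hm1
    constructor
    · rintro ⟨n, h⟩; exact ⟨n + 1, h⟩
    · rintro ⟨n, h⟩
      cases n with
      | zero => exact absurd h hy
      | succ n => exact ⟨n, h⟩
  · have := hstep 0 RS (fun ω => ?_) hm2
    · simpa [retProb] using this
    · constructor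
      · rintro ⟨n, h⟩; exact ⟨n + 1, by omega, h⟩
      · rintro ⟨n, hn, h⟩
        cases n with
        | zero => omega
        | succ n => exact ⟨n, h⟩

/-! ### Part C: entrance times and excursions -/

lemma entT_le_iff {X : Type*} (U : Set X) (ω : ℕ → X) (n : ℕ) :
    entT U ω ≤ n ↔ ∃ i : ℕ, i ≤ n ∧ ω i ∈ U := by
  unfold entT
  constructor
  · intro h
    by_contra hc
    push Not at hc
    have : ((n + 1 : ℕ) : ℕ∞) ≤ sInf {t : ℕ∞ | ∃ n : ℕ, ω n ∈ U ∧ t = n} := by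
      refine le_sInf ?_
      rintro t ⟨i, hi, rfl⟩
      by_contra hlt
      have : i ≤ n := by
        have : (i : ℕ∞) < ((n + 1 : ℕ) : ℕ∞) := not_le.1 hlt
        have := Nat.cast_lt.1 this
        omega
      exact hc i this hi
    have := this.trans h
    have := Nat.cast_le.1 this
    omega
  · rintro ⟨i, hi, h⟩
    have hmem : (i : ℕ∞) ∈ {t : ℕ∞ | ∃ n : ℕ, ω n ∈ U ∧ t = n} := ⟨i, h, rfl⟩
    exact (sInf_le hmem).trans (Nat.cast_le.2 hi)

lemma enat_ext {a b : ℕ∞} (h : ∀ n : ℕ, a ≤ n ↔ b ≤ n) : a = b := by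
  induction a using ENat.recTopCoe with
  | top =>
    induction b using ENat.recTopCoe with
    | top => rfl
    | coe b => have := (h b).2 le_rfl; simp at this
  | coe a =>
    induction b using ENat.recTopCoe with
    | top => have := (h a).1 le_rfl; simp at this
    | coe b => exact le_antisymm ((h b).2 le_rfl) ((h a).1 le_rfl)

lemma entT_zero {X : Type*} (U : Set X) (ω : ℕ → X) (h : ω 0 ∈ U) : entT U ω = 0 := by
  have := (entT_le_iff U ω 0).2 ⟨0, le_rfl, h⟩
  simpa using this

lemma entT_cons {X : Type*} (U : Set X) (x : X) (ω : ℕ → X) (h : x ∉ U) :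
    entT U (consP x ω) = 1 + entT U ω := by
  apply enat_ext
  intro n
  rw [entT_le_iff]
  cases n with
  | zero =>
    constructor
    · rintro ⟨i, hi, hU⟩
      have : i = 0 := by omega
      subst this; exact absurd hU h
    · intro h; simp at h
  | succ n =>
    have : 1 + entT U ω ≤ ((n + 1 : ℕ) : ℕ∞) ↔ entT U ω ≤ n := by
      rw [add_comm (1 : ℕ∞)]; push_cast
      exact ENat.add_le_add_iff_right (by simp)
    rw [this, entT_le_iff]
    constructor
    · rintro ⟨i, hi, hU⟩
      cases i with
      | zero => exact absurd hU h
      | succ i => exact ⟨i, by omega, hU⟩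
    · rintro ⟨i, hi, hU⟩; exact ⟨i + 1, by omega, hU⟩

lemma entT_le {X : Type*} (x : X) (ω : ℕ → X) {t : ℕ∞} (ht : t ≠ ⊤) :
    entT {x} ω ≤ t ↔ ∃ i : ℕ, (i : ℕ∞) ≤ t ∧ ω i = x := by
  lift t to ℕ using ht
  rw [entT_le_iff]
  simp

@[simp] lemma after_top {X : Type*} (f : (ℕ → X) → ℕ∞) (ω : ℕ → X) : after ⊤ f ω = ⊤ := rfl

@[simp] lemma after_coe {X : Type*} (m : ℕ) (f : (ℕ → X) → ℕ∞) (ω : ℕ → X) :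
    after m f ω = m + f fun k => ω (k + m) := rfl

@[simp] lemma after_zero {X : Type*} (f : (ℕ → X) → ℕ∞) (ω : ℕ → X) : after 0 f ω = f ω := by
  have := after_coe 0 f ω
  simpa using this

lemma after_cons {X : Type*} (t : ℕ∞) (f : (ℕ → X) → ℕ∞) (x : X) (ω : ℕ → X) :
    after (1 + t) f (consP x ω) = 1 + after t f ω := by
  induction t using ENat.recTopCoe with
  | top => simp
  | coe m =>
    have h : (1 + (m : ℕ∞)) = ((m + 1 : ℕ) : ℕ∞) := by push_cast; rw [add_comm]
    rw [h, after_coe, after_coe, ← add_assoc, h]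
    rfl

lemma after_assoc {X : Type*} (t : ℕ∞) (f g : (ℕ → X) → ℕ∞) (ω : ℕ → X) :
    after (after t f ω) g ω = after t (fun ω' => after (f ω') g ω') ω := by
  induction t using ENat.recTopCoe with
  | top => simp
  | coe m =>
    rw [after_coe, after_coe]
    generalize hs : f (fun k => ω (k + m)) = s
    induction s using ENat.recTopCoe with
    | top => simp
    | coe l =>
      rw [← Nat.cast_add, after_coe, after_coe]
      push_cast
      rw [add_assoc]
      congr 3
      ext k
      congr 1
      omega

lemma DD_succ (d N : ℕ) (j : ℤ) (k : ℕ) (ω : ℕ → Cyl d N) :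
    DD d N j (k + 1) ω = after (oneExc d N j ω) (DD d N j k) ω := by
  induction k generalizing ω with
  | zero =>
    show after (DD d N j 0 ω) (oneExc d N j) ω = _
    have h0 : DD d N j 0 = fun _ => 0 := by funext; rfl
    rw [h0, after_zero]
    generalize oneExc d N j ω = t
    induction t using ENat.recTopCoe with
    | top => simp
    | coe m => simp
  | succ k ih =>
    show after (DD d N j (k + 1) ω) (oneExc d N j) ω = _
    rw [ih, after_assoc]
    rfl

/-- end of the current excursion, plus `k` further ones -/
noncomputable def InD (d N : ℕ) (j : ℤ) (k : ℕ) (ω : ℕ → Cyl d N) : ℕ∞ :=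
  after (exitT (Btl d N j) ω) (DD d N j k) ω

lemma DD_of_mem (d N : ℕ) (j : ℤ) (k : ℕ) (ω : ℕ → Cyl d N) (h : ω 0 ∈ Bblk d N j) :
    DD d N j (k + 1) ω = InD d N j k ω := by
  rw [DD_succ, oneExc, entT_zero _ _ h, after_zero]
  rfl

lemma DD_cons (d N : ℕ) (j : ℤ) (k : ℕ) (x : Cyl d N) (ω : ℕ → Cyl d N)
    (h : x ∉ Bblk d N j) :
    DD d N j (k + 1) (consP x ω) = 1 + DD d N j (k + 1) ω := by
  rw [DD_succ, DD_succ, oneExc, entT_cons _ _ _ h, after_cons, after_cons]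
  rfl

lemma InD_cons (d N : ℕ) (j : ℤ) (k : ℕ) (x : Cyl d N) (ω : ℕ → Cyl d N)
    (h : x ∈ Btl d N j) :
    InD d N j k (consP x ω) = 1 + InD d N j k ω := by
  rw [InD, exitT, entT_cons _ _ _ (by simpa using h), after_cons]
  rfl

lemma InD_of_not_mem (d N : ℕ) (j : ℤ) (k : ℕ) (ω : ℕ → Cyl d N) (h : ω 0 ∉ Btl d N j) :
    InD d N j k ω = DD d N j k ω := by
  rw [InD, exitT, entT_zero _ _ (by simpa using h), after_zero]

/-! measurability -/

lemma measurable_enat {Ω : Type*} [MeasurableSpace Ω] {f : Ω → ℕ∞}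
    (h : ∀ n : ℕ, MeasurableSet {ω | f ω ≤ n}) : Measurable f := by
  refine measurable_to_countable' fun t => ?_
  have hlt : ∀ n : ℕ, MeasurableSet {ω | f ω = n} := by
    intro n
    cases n with
    | zero =>
      have : {ω | f ω = (0 : ℕ)} = {ω | f ω ≤ (0 : ℕ)} := by ext; simp
      rw [this]; exact h 0
    | succ n =>
      have : {ω | f ω = (n + 1 : ℕ)} = {ω | f ω ≤ (n + 1 : ℕ)} \ {ω | f ω ≤ n} := by
        ext ω
        simp only [Set.mem_ofPred_eq, Set.mem_sdiff, not_le]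
        constructor
        · intro h; rw [h]; exact ⟨le_rfl, by exact_mod_cast Nat.lt_succ_self n⟩
        · rintro ⟨h1, h2⟩
          refine le_antisymm h1 ?_
          push_cast
          exact Order.add_one_le_of_lt h2
      rw [this]; exact (h _).diff (h _)
  induction t using ENat.recTopCoe with
  | top =>
    have : f ⁻¹' {⊤} = (⋃ n : ℕ, {ω | f ω = n})ᶜ := by
      ext ω
      simp only [Set.mem_preimage, Set.mem_singleton_iff, Set.mem_compl_iff, Set.mem_iUnion,
        Set.mem_ofPred_eq, not_exists]
      constructor
      · intro h n; rw [h]; simp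
      · intro h
        by_contra hne
        lift f ω to ℕ using hne with m hm
        exact h m rfl
    rw [this]
    exact (MeasurableSet.iUnion hlt).compl
  | coe n => exact hlt n

lemma measurable_entT {X : Type*} [MeasurableSpace X] {U : Set X} (hU : MeasurableSet U) :
    Measurable (entT U) := by
  refine measurable_enat fun n => ?_
  have : {ω | entT U ω ≤ n} = ⋃ i : ℕ, ⋃ (_ : i ≤ n), {ω | ω i ∈ U} := by
    ext ω; simp [entT_le_iff]
  rw [this]
  exact MeasurableSet.iUnion fun i => MeasurableSet.iUnion fun _ => measurable_pi_apply i hU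

lemma measurable_after {X : Type*} [MeasurableSpace X] {t f : (ℕ → X) → ℕ∞}
    (ht : Measurable t) (hf : Measurable f) : Measurable fun ω => after (t ω) f ω := by
  have h : Measurable fun p : (ℕ → X) × ℕ∞ => after p.2 f p.1 := by
    refine measurable_from_prod_countable_left fun s => ?_
    induction s using ENat.recTopCoe with
    | top => exact measurable_const
    | coe m =>
      simp only [after_coe]
      have h1 : Measurable fun ω : ℕ → X => (fun k => ω (k + m)) :=
        measurable_pi_lambda _ fun k => measurable_pi_apply _
      have h2 : Measurable fun s : ℕ∞ => (m : ℕ∞) + s := measurable_from_top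
      exact h2.comp (hf.comp h1)
  exact h.comp (measurable_id.prodMk ht)

lemma measurable_DD (d N : ℕ) (j : ℤ) (k : ℕ) : Measurable (DD d N j k) := by
  induction k with
  | zero => exact measurable_const
  | succ k ih =>
    have h : Measurable (oneExc d N j) :=
      measurable_after (measurable_entT (Set.to_countable _).measurableSet)
        (measurable_entT (Set.to_countable _).measurableSet)
    exact measurable_after ih h

lemma nbr_height (d N : ℕ) (z : Cyl d N) (i : Fin (d + 1)) (s : ℤ) :
    (z + projE d N (Pi.single i s)).2 = z.2 + if i = Fin.last d then s else 0 := by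
  simp only [projE, Prod.snd_add, Pi.single_apply]
  congr 1
  by_cases h : i = Fin.last d
  · simp [h]
  · simp [h, Ne.symm h]

lemma Pav_mono {d N : ℕ} {f g : Cyl d N → ℝ} (z : Cyl d N)
    (h : ∀ i : Fin (d + 1), ∀ s : ℤ, (s = 1 ∨ s = -1) →
      f (z + projE d N (Pi.single i s)) ≤ g (z + projE d N (Pi.single i s))) :
    Pav d N f z ≤ Pav d N g z := by
  unfold Pav
  refine div_le_div_of_nonneg_right ?_ (by positivity)
  exact Finset.sum_le_sum fun i _ => add_le_add (h i 1 (Or.inl rfl)) (h i (-1) (Or.inr rfl))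

lemma Pav_const (d N : ℕ) (c : ℝ) (z : Cyl d N) : Pav d N (fun _ => c) z = c := by
  unfold Pav
  simp only [Finset.sum_const, Finset.card_univ, Fintype.card_fin, nsmul_eq_mul]
  push_cast
  field_simp
  ring

lemma Pav_add (d N : ℕ) (f g : Cyl d N → ℝ) (z : Cyl d N) :
    Pav d N (fun w => f w + g w) z = Pav d N f z + Pav d N g z := by
  unfold Pav
  rw [← add_div, ← Finset.sum_add_distrib]
  congr 1
  exact Finset.sum_congr rfl fun i _ => by ring

lemma Pav_smul (d N : ℕ) (c : ℝ) (f : Cyl d N → ℝ) (z : Cyl d N) :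
    Pav d N (fun w => c * f w) z = c * Pav d N f z := by
  unfold Pav
  rw [← mul_div_assoc, Finset.mul_sum]
  congr 1
  exact Finset.sum_congr rfl fun i _ => by ring

lemma Pav_sum {ι : Type*} (d N : ℕ) (s : Finset ι) (f : ι → Cyl d N → ℝ) (z : Cyl d N) :
    Pav d N (fun w => ∑ a ∈ s, f a w) z = ∑ a ∈ s, Pav d N (f a) z := by
  unfold Pav
  rw [← Finset.sum_div, Finset.sum_comm]
  congr 1
  exact Finset.sum_congr rfl fun i _ => by rw [Finset.sum_add_distrib]

lemma Pav_height (d N : ℕ) (z : Cyl d N) : Pav d N (fun w => (w.2 : ℝ)) z = z.2 := by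
  unfold Pav
  have : ∀ i : Fin (d + 1), (((z + projE d N (Pi.single i 1)).2 : ℝ) +
      ((z + projE d N (Pi.single i (-1))).2 : ℝ)) = 2 * z.2 := by
    intro i
    rw [nbr_height, nbr_height]
    split_ifs <;> push_cast <;> ring
  rw [Finset.sum_congr rfl fun i _ => this i]
  simp only [Finset.sum_const, Finset.card_univ, Fintype.card_fin, nsmul_eq_mul]
  push_cast
  field_simp

lemma Pav_affine (d N : ℕ) (a b : ℝ) (z : Cyl d N) :
    Pav d N (fun w => a + b * (w.2 : ℝ)) z = a + b * z.2 := by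
  rw [Pav_add, Pav_const, Pav_smul, Pav_height]

lemma Pav_gt {d N : ℕ} {f : Cyl d N → ℝ} (z : Cyl d N) (c : ℝ)
    (h : ∀ i : Fin (d + 1), ∀ s : ℤ, (s = 1 ∨ s = -1) →
      c ≤ f (z + projE d N (Pi.single i s)))
    (h' : c < f (z + projE d N (Pi.single (Fin.last d) 1))) : c < Pav d N f z := by
  rw [← Pav_const d N c z]
  unfold Pav
  refine div_lt_div_of_pos_right ?_ (by positivity)
  refine Finset.sum_lt_sum (fun i _ => add_le_add (h i 1 (Or.inl rfl)) (h i (-1) (Or.inr rfl)))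
    ⟨Fin.last d, Finset.mem_univ _, add_lt_add_of_lt_of_le h' (h _ _ (Or.inr rfl))⟩

/-- minimum principle on a strip -/
lemma min_principle {d N : ℕ} [NeZero N] (f : Cyl d N → ℝ) (lo hi : ℤ)
    (h : ∀ z, lo < z.2 → z.2 < hi → Pav d N f z ≤ f z)
    (hb : ∀ z, z.2 = lo ∨ z.2 = hi → 0 ≤ f z) :
    ∀ z, lo ≤ z.2 → z.2 ≤ hi → 0 ≤ f z := by
  intro z hz1 hz2
  let S : Finset (Cyl d N) := Finset.univ ×ˢ Finset.Icc lo hi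
  have hS : ∀ w, w ∈ S ↔ lo ≤ w.2 ∧ w.2 ≤ hi := by intro w; simp [S]
  obtain ⟨z0, hz0, hmin⟩ := S.exists_min_image f ⟨z, (hS z).2 ⟨hz1, hz2⟩⟩
  refine le_trans ?_ (hmin z ((hS z).2 ⟨hz1, hz2⟩))
  obtain ⟨z1, hz1, hmax⟩ := (S.filter fun w => f w = f z0).exists_max_image (fun w => w.2)
    ⟨z0, by simp [hz0]⟩
  rw [Finset.mem_filter, hS] at hz1
  rw [← hz1.2]
  by_contra hneg
  by_cases hl : z1.2 = lo ∨ z1.2 = hi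
  · exact hneg (hb z1 hl)
  push Not at hl
  have h1 : lo < z1.2 := lt_of_le_of_ne hz1.1.1 (Ne.symm hl.1)
  have h2 : z1.2 < hi := lt_of_le_of_ne hz1.1.2 hl.2
  have hge : ∀ i : Fin (d + 1), ∀ s : ℤ, (s = 1 ∨ s = -1) →
      f z1 ≤ f (z1 + projE d N (Pi.single i s)) := by
    intro i s hs
    rw [hz1.2]
    apply hmin
    rw [hS, nbr_height]
    split_ifs <;> rcases hs with rfl | rfl <;> constructor <;> omega
  have hgt : f z1 < f (z1 + projE d N (Pi.single (Fin.last d) 1)) := by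
    refine lt_of_le_of_ne (hge _ _ (Or.inl rfl)) fun heq => ?_
    have hh := nbr_height d N z1 (Fin.last d) 1
    have := hmax (z1 + projE d N (Pi.single (Fin.last d) 1)) (by
      rw [Finset.mem_filter, hS, hh]
      refine ⟨?_, heq.symm.trans hz1.2⟩
      simp; omega)
    simp only [hh] at this
    simp at this
  exact absurd (h z1 h1 h2) (not_le.2 (Pav_gt z1 _ hge hgt))

lemma half_zero {d N : ℕ} [NeZero N] (f : Cyl d N → ℝ) (a : ℤ) (e : ℤ) (he : e = 1 ∨ e = -1)
    (h : ∀ z, 0 < e * (z.2 - a) → f z ≤ Pav d N f z) (h1 : ∀ z, f z ≤ 1)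
    (hb : ∀ z, z.2 = a → f z ≤ 0) : ∀ z, 0 ≤ e * (z.2 - a) → f z ≤ 0 := by
  intro z hz
  have key : ∀ L : ℕ, e * (z.2 - a) ≤ L → 0 < L →
      f z ≤ ((e * (z.2 - a) : ℤ) : ℝ) / L := by
    intro L hL hL0
    have hL0' : (0 : ℝ) < L := by exact_mod_cast hL0
    let g : Cyl d N → ℝ := fun w => (-(e * a) / L + e / L * (w.2 : ℝ)) + (-1) * f w
    have hPg : ∀ w, Pav d N g w = (-(e * a) / L + e / L * (w.2 : ℝ)) + (-1) * Pav d N f w := by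
      intro w
      rw [Pav_add, Pav_smul, Pav_affine]
    have hg : ∀ w : Cyl d N, g w = ((e * (w.2 - a) : ℤ) : ℝ) / L - f w := by
      intro w; simp only [g]; push_cast; ring
    have hp : 0 ≤ g z := by
      rcases he with rfl | rfl
      · refine min_principle g a (a + L) ?_ ?_ z (by omega) (by omega)
        · intro w hw1 hw2
          rw [hPg]
          have := h w (by omega)
          simp only [g]; linarith
        · intro w hw
          rw [hg]
          rcases hw with hw | hw
          · have := hb w hw
            rw [hw]; simp; exact this
          · have := h1 w
            rw [hw]; simp [hL0'.ne']; exact this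
      · refine min_principle g (a - L) a ?_ ?_ z (by omega) (by omega)
        · intro w hw1 hw2
          rw [hPg]
          have := h w (by omega)
          simp only [g]; linarith
        · intro w hw
          rw [hg]
          rcases hw with hw | hw
          · have := h1 w
            rw [hw]; simp [hL0'.ne']; exact this
          · have := hb w hw
            rw [hw]; simp; exact this
    rw [hg] at hp
    linarith
  by_contra hpos
  push Not at hpos
  set c : ℤ := e * (z.2 - a) with hc
  obtain ⟨n, hn⟩ := exists_nat_gt ((c : ℝ) / f z)
  have hn2 := key (max n (c.toNat + 1)) (by push_cast; omega) (by omega)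
  have hmm : (n : ℝ) ≤ ((max n (c.toNat + 1) : ℕ) : ℝ) := by exact_mod_cast le_max_left _ _
  have hm0 : (0 : ℝ) < ((max n (c.toNat + 1) : ℕ) : ℝ) := by
    have : 0 < max n (c.toNat + 1) := by omega
    exact_mod_cast this
  rw [le_div_iff₀ hm0] at hn2
  rw [div_lt_iff₀ hpos] at hn
  nlinarith

lemma measure_sub {d N : ℕ} {Pl : Cyl d N → Measure (ℕ → Cyl d N)} (h : IsCylRW d N Pl)
    (x : Cyl d N) (T : (ℕ → Cyl d N) → ℕ∞) (hT : Measurable T)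
    (hc : ∀ ω, T (consP x ω) = 1 + T ω) :
    (Pl x {ω | T ω = ⊤}).toReal ≤ Pav d N (fun y => (Pl y {ω | T ω = ⊤}).toReal) x := by
  have hS : MeasurableSet {ω | T ω = ⊤} := hT (measurableSet_singleton _)
  have hfin : ∀ y, Pl y {ω | T ω = ⊤} ≠ ⊤ := fun y => by
    have := h.1 y
    exact measure_ne_top _ _
  have hF := step_le h x (Set.indicator {ω | T ω = ⊤} 1) (Set.indicator {ω | T ω = ⊤} 1)
    (fun ω => by
      simp only [Set.indicator_apply, Set.mem_ofPred_eq, hc]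
      by_cases hω : T ω = ⊤
      · simp [hω]
      · have : (1 + T ω) ≠ ⊤ := by
          simp [hω]
        simp [this])
    (fun y => (Pl y {ω | T ω = ⊤}).toReal) (fun i s _ => ⟨ENNReal.toReal_nonneg, by
      rw [lintegral_indicator_one hS, ENNReal.ofReal_toReal (hfin _)]⟩)
  rw [lintegral_indicator_one hS] at hF
  refine ENNReal.toReal_le_of_le_ofReal ?_ hF
  unfold Pav
  positivity

lemma measurable_InD (d N : ℕ) (j : ℤ) (k : ℕ) : Measurable (InD d N j k) :=
  measurable_after (measurable_entT (Set.to_countable _).measurableSet) (measurable_DD d N j k)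

lemma IsCylRW.start {d N : ℕ} {Pl : Cyl d N → Measure (ℕ → Cyl d N)} (h : IsCylRW d N Pl)
    (x : Cyl d N) : ∀ᵐ ω ∂(Pl x), ω 0 = x :=
  law_start (stepProb d N) Pl h.1 h.cyl x

lemma DD_finite {d N : ℕ} [NeZero N] {Pl : Cyl d N → Measure (ℕ → Cyl d N)}
    (h : IsCylRW d N Pl) (j : ℤ) (k : ℕ) :
    ∀ x, Pl x {ω | DD d N j k ω = ⊤} = 0 := by
  have hfin : ∀ y (S : Set (ℕ → Cyl d N)), Pl y S ≠ ⊤ := fun y S => by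
    have := h.1 y
    exact measure_ne_top _ _
  have hN : (0 : ℤ) < N := by exact_mod_cast Nat.pos_of_ne_zero (NeZero.ne N)
  induction k with
  | zero => intro x; simp [DD]
  | succ k ih =>
    have hIn0 : ∀ x, x ∉ Btl d N j → Pl x {ω | InD d N j k ω = ⊤} = 0 := by
      intro x hx
      refine le_antisymm ?_ (zero_le)
      rw [← ih x]
      refine measure_mono_ae ?_
      filter_upwards [h.start x] with ω hω hh
      have h3 : InD d N j k ω = ⊤ := hh
      rw [InD_of_not_mem _ _ _ _ _ (by rwa [hω])] at h3
      exact h3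
    have hIn : ∀ x, Pl x {ω | InD d N j k ω = ⊤} = 0 := by
      intro x
      by_cases hx : x ∈ Btl d N j
      · have hmp := min_principle (d := d) (N := N)
          (fun y => (-1) * (Pl y {ω | InD d N j k ω = ⊤}).toReal)
          ((j - 2) * N) ((j + 2) * N) (fun z hz1 hz2 => by
            rw [Pav_smul]
            have := measure_sub h z (InD d N j k) (measurable_InD d N j k)
              (fun ω => InD_cons d N j k z ω ⟨by omega, by omega⟩)
            linarith) (fun z hz => by
            rw [hIn0 z]
            · simp
            · rintro ⟨h1, h2⟩
              rcases hz with hz | hz <;> omega) x (by have := hx.1; omega) (by have := hx.2; omega)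
        have h0 : (Pl x {ω | InD d N j k ω = ⊤}).toReal = 0 :=
          le_antisymm (by linarith) ENNReal.toReal_nonneg
        rw [ENNReal.toReal_eq_zero_iff] at h0
        exact h0.resolve_right (hfin _ _)
      · exact hIn0 x hx
    have hB : ∀ x ∈ Bblk d N j, Pl x {ω | DD d N j (k + 1) ω = ⊤} = 0 := by
      intro x hx
      refine le_antisymm ?_ (zero_le)
      rw [← hIn x]
      refine measure_mono_ae ?_
      filter_upwards [h.start x] with ω hω hh
      have h3 : DD d N j (k + 1) ω = ⊤ := hh
      rw [DD_of_mem _ _ _ _ _ (by rwa [hω])] at h3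
      exact h3
    intro x
    have main : ∀ e : ℤ, (e = 1 ∨ e = -1) → 0 ≤ e * (x.2 - (j + e) * N) →
        Pl x {ω | DD d N j (k + 1) ω = ⊤} = 0 := by
      intro e he hx
      have := half_zero (d := d) (N := N) (fun y => (Pl y {ω | DD d N j (k + 1) ω = ⊤}).toReal)
        ((j + e) * N) e he (fun z hz => measure_sub h z _ (measurable_DD d N j (k + 1)) (fun ω =>
            DD_cons d N j k z ω (by
              rintro ⟨h1, h2⟩
              rcases he with rfl | rfl
              · omega
              · rw [sub_eq_add_neg] at h1; omega)))
        (fun z => by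
          have := h.1 z
          exact (ENNReal.toReal_mono (by simp) prob_le_one).trans (by simp))
        (fun z hz => by
          rw [hB z]
          · simp
          · constructor
            · rw [hz]
              rcases he with rfl | rfl <;> nlinarith
            · rw [hz]
              rcases he with rfl | rfl <;> nlinarith) x hx
      have h0 := le_antisymm this ENNReal.toReal_nonneg
      rw [ENNReal.toReal_eq_zero_iff] at h0
      exact h0.resolve_right (hfin _ _)
    by_cases hx : x ∈ Bblk d N j
    · exact hB x hx
    · by_cases h1 : (j + 1) * (N : ℤ) ≤ x.2
      · exact main 1 (Or.inl rfl) (by omega)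
      · refine main (-1) (Or.inr rfl) ?_
        have : x.2 < (j - 1) * N := by
          by_contra hc
          exact hx ⟨by omega, by omega⟩
        have e2 : (j + -1) * (N : ℤ) = (j - 1) * N := by ring
        rw [e2]
        omega

/-- number of points of `A` visited strictly before time `n` and not after time `t` -/
noncomputable def cnt {X : Type*} (A : Finset X) (n : ℕ) (t : ℕ∞) (ω : ℕ → X) : ℝ :=
  ∑ y ∈ A, if ∃ i : ℕ, i < n ∧ (i : ℕ∞) ≤ t ∧ ω i = y then (1 : ℝ) else 0

lemma cnt_cons {X : Type*} (A : Finset X) (n : ℕ) (t : ℕ∞) (x : X) (ω : ℕ → X) :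
    cnt A (n + 1) (1 + t) (consP x ω) ≤ (if x ∈ A then 1 else 0) + cnt A n t ω := by
  have h1 : (if x ∈ A then (1 : ℝ) else 0) = ∑ y ∈ A, if x = y then (1 : ℝ) else 0 := by
    rw [Finset.sum_ite_eq]
  rw [h1, cnt, cnt, ← Finset.sum_add_distrib]
  refine Finset.sum_le_sum fun y _ => ?_
  by_cases hxy : x = y
  · rw [if_pos hxy]
    split_ifs <;> norm_num
  · rw [if_neg hxy, zero_add]
    by_cases h : ∃ i : ℕ, i < n + 1 ∧ (i : ℕ∞) ≤ 1 + t ∧ consP x ω i = y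
    · rw [if_pos h, if_pos]
      obtain ⟨i, hi, hit, hy⟩ := h
      cases i with
      | zero => exact absurd hy hxy
      | succ i =>
        refine ⟨i, by omega, ?_, hy⟩
        rw [add_comm 1 t] at hit
        push_cast at hit
        exact (ENat.add_le_add_iff_right (by simp)).1 hit
    · rw [if_neg h]
      split_ifs <;> norm_num

lemma cnt_eq_zero_of {X : Type*} (A : Finset X) (n : ℕ) (ω : ℕ → X) (h : ω 0 ∉ A) :
    cnt A n 0 ω = 0 := by
  refine Finset.sum_eq_zero fun y hy => if_neg ?_
  rintro ⟨i, _, hi, rfl⟩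
  have : i = 0 := by simpa using hi
  exact h (by rwa [this] at hy)

/-- the supersolution hypotheses -/
structure SuperSol (d N : ℕ) (j : ℤ) (A : Finset (Cyl d N)) (lam ε : ℝ) (h : Cyl d N → ℝ) :
    Prop where
  eps : 0 ≤ ε
  sub : ∀ x ∈ A, x ∈ Bblk d N j
  ge : ∀ z : Cyl d N, (j - 2) * (N : ℤ) ≤ z.2 → z.2 ≤ (j + 2) * (N : ℤ) → 1 ≤ h z
  sup : ∀ z ∈ Btl d N j, Pav d N h z ≤ h z
  supA : ∀ z ∈ A, Real.exp lam * Pav d N h z ≤ h z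
  bd : ∀ z : Cyl d N, z.2 = (j - 1) * (N : ℤ) ∨ z.2 = (j + 1) * (N : ℤ) → h z ≤ 1 + ε

lemma expect_trunc {d N : ℕ} [NeZero N] {Pl : Cyl d N → Measure (ℕ → Cyl d N)}
    (hP : IsCylRW d N Pl) {j : ℤ} {A : Finset (Cyl d N)} {lam ε : ℝ} (hlam : 0 ≤ lam)
    {h : Cyl d N → ℝ} (H : SuperSol d N j A lam ε h) (n : ℕ) :
    (∀ k x, x ∉ Bblk d N j →
      ∫⁻ ω, ENNReal.ofReal (Real.exp (lam * cnt A n (DD d N j k ω) ω)) ∂(Pl x) ≤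
        ENNReal.ofReal ((1 + ε) ^ k)) ∧
    (∀ k x, (j - 2) * (N : ℤ) ≤ x.2 → x.2 ≤ (j + 2) * (N : ℤ) →
      ∫⁻ ω, ENNReal.ofReal (Real.exp (lam * cnt A n (InD d N j k ω) ω)) ∂(Pl x) ≤
        ENNReal.ofReal (h x * (1 + ε) ^ k)) := by
  have hN : (0 : ℤ) < N := by exact_mod_cast Nat.pos_of_ne_zero (NeZero.ne N)
  have hε := H.eps
  have hpow : ∀ k, 1 ≤ (1 + ε) ^ k := fun k => one_le_pow₀ (by linarith)
  have hone : ∀ x, ∫⁻ _, (1 : ℝ≥0∞) ∂(Pl x) = 1 := fun x => by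
    have := hP.1 x
    simp
  induction n with
  | zero =>
    have h0 : ∀ t (ω : ℕ → Cyl d N), cnt A 0 t ω = 0 := by
      intro t ω; simp [cnt]
    constructor
    · intro k x _
      simp only [h0, mul_zero, Real.exp_zero, ENNReal.ofReal_one, hone]
      exact ENNReal.one_le_ofReal.2 (hpow k)
    · intro k x hx1 hx2
      simp only [h0, mul_zero, Real.exp_zero, ENNReal.ofReal_one, hone]
      refine ENNReal.one_le_ofReal.2 ?_
      have := H.ge x hx1 hx2
      nlinarith [hpow k]
  | succ n ih =>
    obtain ⟨ihO, ihI⟩ := ih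
    have hO : ∀ k x, x ∉ Bblk d N j →
        ∫⁻ ω, ENNReal.ofReal (Real.exp (lam * cnt A (n + 1) (DD d N j k ω) ω)) ∂(Pl x) ≤
          ENNReal.ofReal ((1 + ε) ^ k) := by
      intro k x hx
      have hxA : x ∉ A := fun hh => hx (H.sub x hh)
      cases k with
      | zero =>
        rw [lintegral_congr_ae (g := fun _ => 1)]
        · rw [hone]; simp
        · filter_upwards [hP.start x] with ω hω
          have : cnt A (n + 1) (DD d N j 0 ω) ω = 0 := cnt_eq_zero_of A _ ω (by rwa [hω])
          simp [this]
      | succ k =>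
        have := step_le hP x
          (fun ω => ENNReal.ofReal (Real.exp (lam * cnt A (n + 1) (DD d N j (k + 1) ω) ω)))
          (fun ω => ENNReal.ofReal (Real.exp (lam * cnt A n (DD d N j (k + 1) ω) ω)))
          (fun ω => by
            refine ENNReal.ofReal_le_ofReal (Real.exp_le_exp.2 ?_)
            refine mul_le_mul_of_nonneg_left ?_ hlam
            rw [DD_cons _ _ _ _ _ _ hx]
            have := cnt_cons A n (DD d N j (k + 1) ω) x ω
            simpa [hxA] using this)
          (fun _ => (1 + ε) ^ (k + 1)) (fun i s hs => ⟨by have := hpow (k + 1); linarith, by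
            set y := x + projE d N (Pi.single i s) with hy
            by_cases hyB : y ∈ Bblk d N j
            · have hyh := nbr_height d N x i s
              rw [← hy] at hyh
              have hyb : y.2 = (j - 1) * (N : ℤ) ∨ y.2 = (j + 1) * (N : ℤ) := by
                by_contra hcon
                push Not at hcon
                apply hx
                have h1 := lt_of_le_of_ne hyB.1 (Ne.symm hcon.1)
                have h2 := lt_of_le_of_ne hyB.2 hcon.2
                constructor
                · split_ifs at hyh <;> rcases hs with rfl | rfl <;> omega
                · split_ifs at hyh <;> rcases hs with rfl | rfl <;> omega
              have hI := ihI k y (by nlinarith [hyB.1]) (by nlinarith [hyB.2])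
              refine le_trans (le_of_eq ?_) (hI.trans (ENNReal.ofReal_le_ofReal ?_))
              · refine lintegral_congr_ae ?_
                filter_upwards [hP.start y] with ω hω
                rw [DD_of_mem _ _ _ _ _ (by rwa [hω])]
              · rw [pow_succ']
                exact mul_le_mul_of_nonneg_right (H.bd y hyb) (by have := hpow k; linarith)
            · exact ihO (k + 1) y hyB⟩)
        rwa [Pav_const] at this
    refine ⟨hO, ?_⟩
    intro k x hx1 hx2
    by_cases hx : x ∈ Btl d N j
    · set c : ℝ := if x ∈ A then 1 else 0 with hc
      have := step_le hP x
          (fun ω => ENNReal.ofReal (Real.exp (lam * cnt A (n + 1) (InD d N j k ω) ω)))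
          (fun ω => ENNReal.ofReal (Real.exp (lam * c)) *
            ENNReal.ofReal (Real.exp (lam * cnt A n (InD d N j k ω) ω)))
          (fun ω => by
            rw [← ENNReal.ofReal_mul (Real.exp_pos _).le, ← Real.exp_add, ← mul_add]
            refine ENNReal.ofReal_le_ofReal (Real.exp_le_exp.2 ?_)
            refine mul_le_mul_of_nonneg_left ?_ hlam
            rw [InD_cons _ _ _ _ _ _ hx]
            have := cnt_cons A n (InD d N j k ω) x ω
            rw [hc]
            by_cases hxA : x ∈ A
            · rw [if_pos hxA] at this ⊢
              exact this
            · rw [if_neg hxA] at this ⊢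
              exact this)
          (fun y => (Real.exp (lam * c) * (1 + ε) ^ k) * h y) (fun i s hs => by
            set y := x + projE d N (Pi.single i s) with hy
            have hyh := nbr_height d N x i s
            rw [← hy] at hyh
            have hy1 : (j - 2) * (N : ℤ) ≤ y.2 := by
              have := hx.1
              split_ifs at hyh <;> rcases hs with rfl | rfl <;> omega
            have hy2 : y.2 ≤ (j + 2) * (N : ℤ) := by
              have := hx.2
              split_ifs at hyh <;> rcases hs with rfl | rfl <;> omega
            have hge := H.ge y hy1 hy2
            have hpk := hpow k
            refine ⟨by positivity, ?_⟩
            rw [lintegral_const_mul' _ _ ENNReal.ofReal_ne_top, mul_assoc,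
              ENNReal.ofReal_mul (Real.exp_pos _).le, mul_comm _ (h y)]
            gcongr
            exact ihI k y hy1 hy2)
      refine this.trans (ENNReal.ofReal_le_ofReal ?_)
      rw [Pav_smul]
      have hpk := hpow k
      have key : Real.exp (lam * c) * Pav d N h x ≤ h x := by
        by_cases hxA : x ∈ A
        · simpa [hc, hxA] using H.supA x hxA
        · simpa [hc, hxA] using H.sup x hx
      nlinarith
    · have hxB : x ∉ Bblk d N j := by
        rintro ⟨h1, h2⟩
        exact hx ⟨by nlinarith, by nlinarith⟩
      rw [lintegral_congr_ae (g := fun ω => ENNReal.ofReal (Real.exp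
        (lam * cnt A (n + 1) (DD d N j k ω) ω)))]
      · refine (hO k x hxB).trans (ENNReal.ofReal_le_ofReal ?_)
        have := H.ge x hx1 hx2
        nlinarith [hpow k]
      · filter_upwards [hP.start x] with ω hω
        rw [InD_of_not_mem _ _ _ _ _ (by rwa [hω])]

lemma measurable_cnt {d N : ℕ} (A : Finset (Cyl d N)) (n : ℕ) {T : (ℕ → Cyl d N) → ℕ∞}
    (hT : Measurable T) : Measurable fun ω => cnt A n (T ω) ω := by
  unfold cnt
  refine Finset.measurable_sum _ fun y _ => ?_
  refine Measurable.ite ?_ measurable_const measurable_const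
  have : {ω : ℕ → Cyl d N | ∃ i : ℕ, i < n ∧ (i : ℕ∞) ≤ T ω ∧ ω i = y} =
      ⋃ i : ℕ, ⋃ (_ : i < n), (T ⁻¹' Set.Ici (i : ℕ∞)) ∩ ((fun ω => ω i) ⁻¹' {y}) := by
    ext ω; simp [and_left_comm]
  rw [this]
  refine MeasurableSet.iUnion fun i => MeasurableSet.iUnion fun _ => ?_
  exact (hT (Set.to_countable _).measurableSet).inter
    (measurable_pi_apply i (measurableSet_singleton _))

/-- the exponent in the theorem -/
noncomputable def ecount {d N : ℕ} (j : ℤ) (A : Finset (Cyl d N)) (k : ℕ) (ω : ℕ → Cyl d N) : ℝ :=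
  ∑ x ∈ A, if entT {x} ω ≤ DD d N j k ω then (1 : ℝ) else 0

lemma measurable_ecount {d N : ℕ} (j : ℤ) (A : Finset (Cyl d N)) (k : ℕ) :
    Measurable (ecount j A k) := by
  unfold ecount
  refine Finset.measurable_sum _ fun y _ => ?_
  refine Measurable.ite ?_ measurable_const measurable_const
  have h := (measurable_entT (X := Cyl d N) (measurableSet_singleton y)).prodMk (measurable_DD d N j k)
  exact h (Set.to_countable {p : ℕ∞ × ℕ∞ | p.1 ≤ p.2}).measurableSet

lemma expect_lim {d N : ℕ} [NeZero N] {Pl : Cyl d N → Measure (ℕ → Cyl d N)}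
    (hP : IsCylRW d N Pl) (j : ℤ) (A : Finset (Cyl d N)) (lam : ℝ) (k : ℕ) (x : Cyl d N)
    (C : ℝ≥0∞)
    (h : ∀ n, ∫⁻ ω, ENNReal.ofReal (Real.exp (lam * cnt A n (DD d N j k ω) ω)) ∂(Pl x) ≤ C) :
    ∫⁻ ω, ENNReal.ofReal (Real.exp (lam * ecount j A k ω)) ∂(Pl x) ≤ C := by
  have hae : ∀ᵐ ω ∂(Pl x), DD d N j k ω ≠ ⊤ := by
    rw [ae_iff]
    simpa using DD_finite hP j k x
  calc ∫⁻ ω, ENNReal.ofReal (Real.exp (lam * ecount j A k ω)) ∂(Pl x)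
      ≤ ∫⁻ ω, liminf (fun n => ENNReal.ofReal (Real.exp (lam * cnt A n (DD d N j k ω) ω))) atTop
          ∂(Pl x) := by
        refine lintegral_mono_ae ?_
        filter_upwards [hae] with ω hω
        refine le_of_eq (Tendsto.liminf_eq ?_).symm
        refine tendsto_const_nhds.congr' ?_
        obtain ⟨t, ht⟩ := ENat.ne_top_iff_exists.1 hω
        filter_upwards [eventually_gt_atTop t] with n hn
        congr 3
        unfold ecount cnt
        refine Finset.sum_congr rfl fun y _ => ?_
        have hiff : entT {y} ω ≤ DD d N j k ω ↔
            ∃ i : ℕ, i < n ∧ (i : ℕ∞) ≤ DD d N j k ω ∧ ω i = y := by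
          rw [entT_le y ω hω]
          constructor
          · rintro ⟨i, hi, hy⟩
            refine ⟨i, ?_, hi, hy⟩
            rw [← ht] at hi
            have := Nat.cast_le.1 hi
            omega
          · rintro ⟨i, _, hi, hy⟩
            exact ⟨i, hi, hy⟩
        by_cases hq : entT {y} ω ≤ DD d N j k ω
        · rw [if_pos hq, if_pos (hiff.1 hq)]
        · rw [if_neg hq, if_neg (fun hc => hq (hiff.2 hc))]
    _ ≤ liminf (fun n => ∫⁻ ω, ENNReal.ofReal (Real.exp (lam * cnt A n (DD d N j k ω) ω))
          ∂(Pl x)) atTop := by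
        refine lintegral_liminf_le fun n => ?_
        exact (Real.measurable_exp.comp
          ((measurable_cnt A n (measurable_DD d N j k)).const_mul lam)).ennreal_ofReal
    _ ≤ C := by
        refine liminf_le_of_le (by isBoundedDefault) fun b hb => ?_
        obtain ⟨n, hn⟩ := hb.exists
        exact hn.trans (h n)

lemma expect_x {d N : ℕ} [NeZero N] {Pl : Cyl d N → Measure (ℕ → Cyl d N)}
    (hP : IsCylRW d N Pl) {j : ℤ} {A : Finset (Cyl d N)} {lam ε : ℝ} (hlam : 0 ≤ lam)
    {h : Cyl d N → ℝ} (H : SuperSol d N j A lam ε h) (k : ℕ) (x : Cyl d N) :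
    ∫⁻ ω, ENNReal.ofReal (Real.exp (lam * ecount j A (k + 1) ω)) ∂(Pl x) ≤
      ENNReal.ofReal ((if x ∈ Bblk d N j then h x else 1) * (1 + ε) ^ (k + 1)) := by
  have hN : (0 : ℤ) < N := by exact_mod_cast Nat.pos_of_ne_zero (NeZero.ne N)
  have hε := H.eps
  have hpow : ∀ k, 1 ≤ (1 + ε) ^ k := fun k => one_le_pow₀ (by linarith)
  refine expect_lim hP j A lam (k + 1) x _ fun n => ?_
  by_cases hx : x ∈ Bblk d N j
  · rw [if_pos hx]
    have h1 : (j - 2) * (N : ℤ) ≤ x.2 := by nlinarith [hx.1]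
    have h2 : x.2 ≤ (j + 2) * (N : ℤ) := by nlinarith [hx.2]
    refine le_trans (le_of_eq ?_) (((expect_trunc hP hlam H n).2 k x h1 h2).trans
      (ENNReal.ofReal_le_ofReal ?_))
    · refine lintegral_congr_ae ?_
      filter_upwards [hP.start x] with ω hω
      rw [DD_of_mem _ _ _ _ _ (by rwa [hω])]
    · have := H.ge x h1 h2
      rw [pow_succ]
      have := hpow k
      have : (1 + ε) ^ k ≤ (1 + ε) ^ k * (1 + ε) := by nlinarith
      nlinarith
  · rw [if_neg hx, one_mul]
    exact (expect_trunc hP hlam H n).1 (k + 1) x hx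

/-- averaging over the uniform initial distribution on `B_0` -/
lemma expect_avg {d N : ℕ} [NeZero N] {Pl : Cyl d N → Measure (ℕ → Cyl d N)}
    (hP : IsCylRW d N Pl) {j : ℤ} {A : Finset (Cyl d N)} {lam ε : ℝ} (hlam : 0 ≤ lam)
    {h : Cyl d N → ℝ} (H : SuperSol d N j A lam ε h) (k : ℕ) (δ : ℝ) (hδ : 0 ≤ δ)
    (hh : ∀ a : ℤ, (j - 1) * (N : ℤ) ≤ a → a ≤ (j + 1) * (N : ℤ) →
      ∑ y : Fin d → ZMod N, h (y, a) ≤ (N : ℝ) ^ d * (1 + δ)) :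
    ∫ ω, Real.exp (lam * ecount j A (k + 1) ω) ∂(lawP d N Pl) ≤ (1 + δ) * (1 + ε) ^ (k + 1) := by
  have hε := H.eps
  have hN0 : (0 : ℝ) < N := by exact_mod_cast Nat.pos_of_ne_zero (NeZero.ne N)
  have hpow : ∀ k, 1 ≤ (1 + ε) ^ k := fun k => one_le_pow₀ (by linarith)
  have hm : Measurable fun ω => Real.exp (lam * ecount j A (k + 1) ω) :=
    Real.measurable_exp.comp ((measurable_ecount j A (k + 1)).const_mul lam)
  have hN : (0 : ℤ) < N := by exact_mod_cast Nat.pos_of_ne_zero (NeZero.ne N)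
  rw [integral_eq_lintegral_of_nonneg_ae (Eventually.of_forall fun ω => (Real.exp_pos _).le)
    hm.aestronglyMeasurable]
  refine ENNReal.toReal_le_of_le_ofReal (by have := hpow (k + 1); positivity) ?_
  unfold lawP
  rw [lintegral_smul_measure, lintegral_sum_measure]
  let g : Cyl d N → ℝ := fun x => (if x ∈ Bblk d N j then h x else 1) * (1 + ε) ^ (k + 1)
  let S : Finset (Cyl d N) := Finset.univ ×ˢ Finset.Icc (-(N : ℤ)) N
  have hS : ∀ x, x ∈ S ↔ x ∈ Bblk d N 0 := by
    intro x; simp [S, Bblk]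
  have hg0 : ∀ x, 0 ≤ g x := by
    intro x
    have := hpow (k + 1)
    refine mul_nonneg ?_ (by linarith)
    split_ifs with hx
    · have := H.ge x (by nlinarith [hx.1]) (by nlinarith [hx.2])
      linarith
    · norm_num
  have hsum : (∑' x : Cyl d N, ∫⁻ ω, ENNReal.ofReal (Real.exp (lam * ecount j A (k + 1) ω))
      ∂(if x ∈ Bblk d N 0 then Pl x else 0)) ≤ ENNReal.ofReal (∑ x ∈ S, g x) := by
    rw [tsum_eq_sum (s := S), ENNReal.ofReal_sum_of_nonneg fun x _ => hg0 x]
    · refine Finset.sum_le_sum fun x hx => ?_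
      rw [if_pos ((hS x).1 hx)]
      exact expect_x hP hlam H k x
    · intro x hx
      rw [if_neg (fun hc => hx ((hS x).2 hc))]
      simp
  have hle : ∑ x ∈ S, g x ≤ ((N : ℝ) ^ d * (2 * N + 1)) * ((1 + δ) * (1 + ε) ^ (k + 1)) := by
    simp only [g, S]
    rw [← Finset.sum_mul, Finset.sum_product_right, ← mul_assoc]
    refine mul_le_mul_of_nonneg_right ?_ (by have := hpow (k + 1); linarith)
    have hrow : ∀ a ∈ Finset.Icc (-(N : ℤ)) N, (∑ y : Fin d → ZMod N,
        (if ((y, a) : Cyl d N) ∈ Bblk d N j then h (y, a) else 1)) ≤ (N : ℝ) ^ d * (1 + δ) := by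
      intro a _
      by_cases ha : (j - 1) * (N : ℤ) ≤ a ∧ a ≤ (j + 1) * (N : ℤ)
      · rw [Finset.sum_congr rfl fun y _ => if_pos (show ((y, a) : Cyl d N) ∈ Bblk d N j from ha)]
        exact hh a ha.1 ha.2
      · rw [Finset.sum_congr rfl fun y _ => if_neg (show ((y, a) : Cyl d N) ∉ Bblk d N j from ha)]
        simp only [Finset.sum_const, Finset.card_univ, Fintype.card_pi, ZMod.card,
          Finset.prod_const, Fintype.card_fin, nsmul_eq_mul, mul_one]
        push_cast
        have : (0 : ℝ) ≤ (N : ℝ) ^ d := by positivity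
        nlinarith
    refine (Finset.sum_le_sum hrow).trans (le_of_eq ?_)
    have hcard : ((Finset.Icc (-(N : ℤ)) N).card : ℝ) = 2 * N + 1 := by
      rw [Int.card_Icc]
      have : ((N : ℤ) + 1 - -(N : ℤ)).toNat = 2 * N + 1 := by omega
      rw [this]; push_cast; ring
    rw [Finset.sum_const, nsmul_eq_mul, hcard]
    ring
  have hc : ((N : ℝ≥0∞) ^ d * (2 * N + 1)) = ENNReal.ofReal ((N : ℝ) ^ d * (2 * N + 1)) := by
    rw [ENNReal.ofReal_mul (by positivity), ENNReal.ofReal_pow (by positivity),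
      ENNReal.ofReal_natCast, ENNReal.ofReal_add (by positivity) (by norm_num),
      ENNReal.ofReal_mul (by norm_num)]
    simp
  have hpos : (0 : ℝ) < (N : ℝ) ^ d * (2 * N + 1) := by positivity
  refine (smul_le_smul_of_nonneg_left (hsum.trans (ENNReal.ofReal_le_ofReal hle))
    zero_le).trans (le_of_eq ?_)
  rw [smul_eq_mul, ENNReal.ofReal_mul hpos.le, hc, ← mul_assoc, ENNReal.inv_mul_cancel
    (ENNReal.ofReal_pos.2 hpos).ne' ENNReal.ofReal_ne_top, one_mul]

/-! Fourier analysis on the torus -/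

/-- `cos(2π k y / N)` -/
noncomputable def cs {N : ℕ} [NeZero N] (k y : ZMod N) : ℝ := (ZMod.stdAddChar (k * y)).re

lemma cs_comm {N : ℕ} [NeZero N] (k y : ZMod N) : cs k y = cs y k := by
  rw [cs, cs, mul_comm]

lemma abs_cs_le {N : ℕ} [NeZero N] (k y : ZMod N) : |cs k y| ≤ 1 :=
  (Complex.abs_re_le_norm _).trans (AddChar.norm_apply _ _).le

lemma cs_zero {N : ℕ} [NeZero N] (y : ZMod N) : cs 0 y = 1 := by
  simp [cs]

lemma cs_rec {N : ℕ} [NeZero N] (k y : ZMod N) :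
    cs k (y + 1) + cs k (y - 1) = 2 * cs k 1 * cs k y := by
  unfold cs
  rw [mul_add, mul_sub, sub_eq_add_neg, AddChar.map_add_eq_mul, AddChar.map_add_eq_mul,
    AddChar.map_neg_eq_conj]
  simp only [Complex.mul_re, Complex.conj_re, Complex.conj_im]
  ring

lemma cs_sum {N : ℕ} [NeZero N] (y : ZMod N) :
    ∑ k : ZMod N, cs k y = if y = 0 then (N : ℝ) else 0 := by
  have h := AddChar.sum_mulShift y (ZMod.isPrimitive_stdAddChar N)
  unfold cs
  rw [← Complex.re_sum, h, ZMod.card]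
  split_ifs <;> simp

lemma cs_sum' {N : ℕ} [NeZero N] (k : ZMod N) :
    ∑ y : ZMod N, cs k y = if k = 0 then (N : ℝ) else 0 := by
  rw [← cs_sum]
  exact Finset.sum_congr rfl fun y _ => cs_comm _ _

/-- distance to zero on the torus -/
def nm {N : ℕ} (k : ZMod N) : ℕ := k.valMinAbs.natAbs

lemma nm_le {N : ℕ} [NeZero N] (k : ZMod N) : nm k ≤ N / 2 := ZMod.natAbs_valMinAbs_le k

lemma nm_pos {N : ℕ} [NeZero N] (k : ZMod N) (h : k ≠ 0) : 1 ≤ nm k := by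
  unfold nm
  have : k.valMinAbs ≠ 0 := fun hc => h (by rwa [ZMod.valMinAbs_eq_zero] at hc)
  omega

lemma one_sub_cs {N : ℕ} [NeZero N] (k : ZMod N) :
    8 * (nm k : ℝ) ^ 2 / (N : ℝ) ^ 2 ≤ 1 - cs k 1 := by
  have hN : (0 : ℝ) < N := by exact_mod_cast Nat.pos_of_ne_zero (NeZero.ne N)
  have h1 : cs k 1 = Real.cos (2 * (Real.pi * (nm k : ℝ) / N)) := by
    unfold cs
    rw [mul_one]
    conv_lhs => rw [← ZMod.coe_valMinAbs k]
    rw [ZMod.stdAddChar_coe]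
    have : (2 * (Real.pi : ℂ) * Complex.I * (k.valMinAbs : ℂ) / (N : ℂ)) =
        ((2 * (Real.pi * (k.valMinAbs : ℝ) / N) : ℝ) : ℂ) * Complex.I := by
      push_cast; ring
    rw [this, Complex.exp_ofReal_mul_I_re]
    unfold nm
    rw [← Real.cos_abs, abs_mul, abs_div, abs_mul, abs_of_pos Real.pi_pos, abs_of_pos hN,
      abs_of_pos (by norm_num : (0 : ℝ) < 2)]
    congr 4
    rw [Nat.cast_natAbs]
    push_cast
    rfl
  set θ := Real.pi * (nm k : ℝ) / N with hθ
  have hθ0 : 0 ≤ θ := by positivity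
  have hle : (nm k : ℝ) ≤ N / 2 := by
    have := nm_le k
    have h2 : 2 * nm k ≤ N := by omega
    have : (2 : ℝ) * nm k ≤ N := by exact_mod_cast h2
    linarith
  have hθ1 : θ ≤ Real.pi / 2 := by
    rw [hθ, div_le_iff₀ hN]
    have := Real.pi_pos
    nlinarith
  have hs := Real.mul_le_sin hθ0 hθ1
  have hs2 : 2 / Real.pi * θ = 2 * nm k / N := by
    rw [hθ]; field_simp
  rw [hs2] at hs
  have hs0 : (0 : ℝ) ≤ 2 * nm k / N := by positivity
  rw [h1, Real.cos_two_mul]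
  have hsq := Real.sin_sq_add_cos_sq θ
  have : (2 * nm k / N : ℝ) ^ 2 ≤ Real.sin θ ^ 2 := by gcongr
  have e : 8 * (nm k : ℝ) ^ 2 / (N : ℝ) ^ 2 = 2 * (2 * nm k / N : ℝ) ^ 2 := by
    field_simp; ring
  rw [e]
  linarith

lemma sum_nm_le {N : ℕ} [NeZero N] (φ : ℕ → ℝ) (hφ : ∀ v, 0 ≤ φ v) :
    ∑ k : ZMod N, φ (nm k) ≤ 2 * ∑ v ∈ Finset.range (N + 1), φ v := by
  have h1 : ∑ k : ZMod N, φ (nm k) ≤ ∑ v ∈ Finset.range N, (φ v + φ (N - v)) := by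
    have hb : ∑ k : ZMod N, φ (nm k) ≤ ∑ k : ZMod N, (φ k.val + φ (N - k.val)) := by
      refine Finset.sum_le_sum fun k _ => ?_
      unfold nm
      rw [ZMod.valMinAbs_natAbs_eq_min]
      rcases min_choice k.val (N - k.val) with h | h <;> rw [h]
      · linarith [hφ (N - k.val)]
      · linarith [hφ k.val]
    refine hb.trans (le_of_eq ?_)
    refine Finset.sum_bij (fun k _ => k.val) (fun k _ => Finset.mem_range.2 (ZMod.val_lt k))
      (fun a _ b _ h => ZMod.val_injective N h) (fun b hb => ⟨(b : ZMod N), Finset.mem_univ _,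
        ZMod.val_cast_of_lt (Finset.mem_range.1 hb)⟩) (fun _ _ => rfl)
  rw [Finset.sum_add_distrib] at h1
  have h2 : ∑ v ∈ Finset.range N, φ v ≤ ∑ v ∈ Finset.range (N + 1), φ v := by
    rw [Finset.sum_range_succ]; linarith [hφ N]
  have h3 : ∑ v ∈ Finset.range N, φ (N - v) ≤ ∑ v ∈ Finset.range (N + 1), φ v := by
    have h := Finset.sum_range_reflect φ (N + 1)
    rw [← h, Finset.sum_range_succ]
    have : ∑ v ∈ Finset.range N, φ (N - v) = ∑ v ∈ Finset.range N, φ (N + 1 - 1 - v) := rfl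
    rw [this]
    linarith [hφ (N + 1 - 1 - N)]
  linarith

/-! the torus modes -/

section modes
variable {d N : ℕ} [NeZero N]

noncomputable def bet (ξ : Fin d → ZMod N) : ℝ := ∑ i, (1 - cs (ξ i) 1)

noncomputable def cc (ξ y : Fin d → ZMod N) : ℝ := ∏ i, cs (ξ i) (y i)

lemma abs_cc_le (ξ y : Fin d → ZMod N) : |cc ξ y| ≤ 1 := by
  unfold cc
  rw [Finset.abs_prod]
  exact Finset.prod_le_one (fun _ _ => abs_nonneg _) fun i _ => abs_cs_le _ _

lemma cc_sum (y : Fin d → ZMod N) :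
    ∑ ξ : Fin d → ZMod N, cc ξ y = if y = 0 then (N : ℝ) ^ d else 0 := by
  have h := Finset.prod_univ_sum (fun _ : Fin d => (Finset.univ : Finset (ZMod N)))
    (fun i k => cs k (y i))
  rw [Fintype.piFinset_univ] at h
  unfold cc
  rw [← h]
  simp only [cs_sum]
  split_ifs with hy
  · subst hy; simp
  · obtain ⟨i, hi⟩ := Function.ne_iff.1 hy
    exact Finset.prod_eq_zero (Finset.mem_univ i) (if_neg hi)

lemma cc_comm (ξ y : Fin d → ZMod N) : cc ξ y = cc y ξ := by
  unfold cc
  exact Finset.prod_congr rfl fun i _ => cs_comm _ _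

lemma cc_sum' (ξ : Fin d → ZMod N) :
    ∑ y : Fin d → ZMod N, cc ξ y = if ξ = 0 then (N : ℝ) ^ d else 0 := by
  rw [← cc_sum]
  exact Finset.sum_congr rfl fun y _ => cc_comm _ _

lemma cc_rec (ξ y : Fin d → ZMod N) (i : Fin d) :
    cc ξ (y + Pi.single i 1) + cc ξ (y + Pi.single i (-1)) = 2 * cs (ξ i) 1 * cc ξ y := by
  unfold cc
  have hsp : ∀ g : Fin d → ZMod N, ∏ l, cs (ξ l) (g l) =
      cs (ξ i) (g i) * ∏ l ∈ Finset.univ.erase i, cs (ξ l) (g l) := fun g =>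
    (Finset.mul_prod_erase _ (fun l => cs (ξ l) (g l)) (Finset.mem_univ i)).symm
  rw [hsp, hsp, hsp y]
  have h : ∀ s : ZMod N, ∏ l ∈ Finset.univ.erase i, cs (ξ l) ((y + (Pi.single i s : Fin d → ZMod N)) l) =
      ∏ l ∈ Finset.univ.erase i, cs (ξ l) (y l) := by
    intro s
    refine Finset.prod_congr rfl fun l hl => ?_
    rw [Pi.add_apply, Pi.single_eq_of_ne (Finset.ne_of_mem_erase hl), add_zero]
  rw [h, h, ← add_mul, ← mul_assoc]
  congr 1
  rw [Pi.add_apply, Pi.add_apply, Pi.single_eq_same, Pi.single_eq_same, ← sub_eq_add_neg, cs_rec]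

lemma bet_ge (ξ : Fin d → ZMod N) (i : Fin d) :
    8 * (nm (ξ i) : ℝ) ^ 2 / (N : ℝ) ^ 2 ≤ bet ξ := by
  refine (one_sub_cs (ξ i)).trans ?_
  unfold bet
  exact Finset.single_le_sum (f := fun i => 1 - cs (ξ i) 1) (fun l _ => by
    have := (abs_le.1 (abs_cs_le (ξ l) 1)).2
    linarith) (Finset.mem_univ i)

lemma bet_nonneg (ξ : Fin d → ZMod N) : 0 ≤ bet ξ :=
  Finset.sum_nonneg fun l _ => by
    have := (abs_le.1 (abs_cs_le (ξ l) 1)).2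
    linarith

lemma bet_le (ξ : Fin d → ZMod N) : bet ξ ≤ 2 * d := by
  have : bet ξ ≤ ∑ _i : Fin d, (2 : ℝ) := Finset.sum_le_sum fun l _ => by
    have := (abs_le.1 (abs_cs_le (ξ l) 1)).1
    linarith
  simpa [mul_comm] using this

lemma bet_zero : bet (0 : Fin d → ZMod N) = 0 := by
  simp [bet, cs_zero]

lemma bet_pos (ξ : Fin d → ZMod N) (h : ξ ≠ 0) : 0 < bet ξ := by
  obtain ⟨i, hi⟩ := Function.ne_iff.1 h
  refine lt_of_lt_of_le ?_ (bet_ge ξ i)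
  have hN : (0 : ℝ) < N := by exact_mod_cast Nat.pos_of_ne_zero (NeZero.ne N)
  have : (0 : ℝ) < nm (ξ i) := by exact_mod_cast nm_pos _ hi
  positivity

/-- synthesis of a function on the cylinder from its modes -/
noncomputable def syn (f : (Fin d → ZMod N) → ℤ → ℝ) (w : Cyl d N) : ℝ :=
  ((N : ℝ) ^ d)⁻¹ * ∑ ξ, cc ξ w.1 * f ξ w.2

/-- the walk operator on the modes -/
noncomputable def Kop (f : (Fin d → ZMod N) → ℤ → ℝ) (ξ : Fin d → ZMod N) (a : ℤ) : ℝ :=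
  ((d - bet ξ) * f ξ a + (f ξ (a + 1) + f ξ (a - 1)) / 2) / (d + 1)

lemma projE_castSucc {d N : ℕ} (i : Fin d) (s : ℤ) :
    projE d N (Pi.single i.castSucc s) = (Pi.single i (s : ZMod N), 0) := by
  ext l
  · simp only [projE]
    by_cases h : l = i
    · subst h; simp
    · rw [Pi.single_eq_of_ne h, Pi.single_eq_of_ne]
      · simp
      · simpa using h
  · simp only [projE]
    rw [Pi.single_eq_of_ne]
    exact (Fin.castSucc_lt_last i).ne'

lemma projE_last {d N : ℕ} (s : ℤ) : projE d N (Pi.single (Fin.last d) s) = (0, s) := by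
  ext l
  · simp only [projE]
    rw [Pi.single_eq_of_ne]
    · simp
    · exact (Fin.castSucc_lt_last l).ne
  · simp [projE]

lemma Pav_syn (f : (Fin d → ZMod N) → ℤ → ℝ) (w : Cyl d N) :
    Pav d N (syn f) w = syn (Kop f) w := by
  have h1 : ∀ ξ : Fin d → ZMod N, Pav d N (fun z => cc ξ z.1 * f ξ z.2) w =
      cc ξ w.1 * Kop f ξ w.2 := by
    intro ξ
    unfold Pav
    rw [Fin.sum_univ_castSucc]
    simp only [projE_castSucc, projE_last, Prod.fst_add, Prod.snd_add, add_zero]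
    have : ∀ i : Fin d, cc ξ (w.1 + Pi.single i ((1 : ℤ) : ZMod N)) * f ξ w.2 +
        cc ξ (w.1 + Pi.single i ((-1 : ℤ) : ZMod N)) * f ξ w.2 =
        2 * cs (ξ i) 1 * (cc ξ w.1 * f ξ w.2) := by
      intro i
      rw [← add_mul]
      push_cast
      rw [cc_rec]; ring
    rw [Finset.sum_congr rfl fun i _ => this i, ← Finset.sum_mul, ← Finset.mul_sum]
    have hb : ∑ i, cs (ξ i) 1 = d - bet ξ := by
      unfold bet; rw [Finset.sum_sub_distrib]; simp
    rw [hb, Kop]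
    field_simp
    rw [← sub_eq_add_neg]
  unfold syn
  rw [Pav_smul, Pav_sum]
  simp only [h1]

/-- the vertical Green functions of the modes -/
noncomputable def sig (ξ : Fin d → ZMod N) : ℝ := Real.sqrt (bet ξ ^ 2 + 2 * bet ξ)

noncomputable def rh (ξ : Fin d → ZMod N) : ℝ := 1 + bet ξ - sig ξ

noncomputable def GG (C : ℝ) (ξ : Fin d → ZMod N) (a : ℤ) : ℝ :=
  if ξ = 0 then (d + 1) * (C * N - |(a : ℝ)|) else (d + 1) / sig ξ * rh ξ ^ a.natAbs

lemma sig_sq (ξ : Fin d → ZMod N) : sig ξ ^ 2 = bet ξ ^ 2 + 2 * bet ξ := by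
  have := bet_nonneg ξ
  exact Real.sq_sqrt (by positivity)

lemma sig_nonneg (ξ : Fin d → ZMod N) : 0 ≤ sig ξ := Real.sqrt_nonneg _

lemma sig_pos (ξ : Fin d → ZMod N) (h : ξ ≠ 0) : 0 < sig ξ := by
  have := bet_pos ξ h
  exact Real.sqrt_pos.2 (by positivity)

lemma sig_le (ξ : Fin d → ZMod N) : sig ξ ≤ bet ξ + 1 := by
  have := bet_nonneg ξ
  have := sig_sq ξ
  have := sig_nonneg ξ
  nlinarith

lemma rh_mul (ξ : Fin d → ZMod N) : rh ξ * (1 + bet ξ + sig ξ) = 1 := by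
  have := sig_sq ξ
  unfold rh
  nlinarith

lemma rh_pos (ξ : Fin d → ZMod N) : 0 < rh ξ := by
  have h1 := rh_mul ξ
  have h2 := bet_nonneg ξ
  have h3 := sig_nonneg ξ
  by_contra h
  push Not at h
  nlinarith

lemma rh_lt_one (ξ : Fin d → ZMod N) (h : ξ ≠ 0) : rh ξ < 1 := by
  have h1 := rh_mul ξ
  have h2 := bet_nonneg ξ
  have h3 := sig_pos ξ h
  have h4 := rh_pos ξ
  by_contra h
  push Not at h
  nlinarith

lemma rh_quad (ξ : Fin d → ZMod N) : rh ξ ^ 2 + 1 = 2 * (1 + bet ξ) * rh ξ := by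
  have := sig_sq ξ
  unfold rh
  nlinarith

lemma GG_green (C : ℝ) (ξ : Fin d → ZMod N) (a : ℤ) :
    GG C ξ a - Kop (GG C) ξ a = if a = 0 then 1 else 0 := by
  by_cases hξ : ξ = 0
  · have hb : bet ξ = 0 := by rw [hξ, bet_zero]
    simp only [Kop, GG, if_pos hξ, hb]
    have habs : |((a + 1 : ℤ) : ℝ)| + |((a - 1 : ℤ) : ℝ)| - 2 * |(a : ℝ)| =
        if a = 0 then 2 else 0 := by
      have : |a + 1| + |a - 1| - 2 * |a| = if a = 0 then 2 else 0 := by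
        split_ifs with h
        · subst h; norm_num
        · rcases lt_or_gt_of_ne h with h | h
          · rw [abs_of_nonpos (by omega : a + 1 ≤ 0), abs_of_nonpos (by omega : a - 1 ≤ 0),
              abs_of_neg h]; ring
          · rw [abs_of_nonneg (by omega : 0 ≤ a + 1), abs_of_nonneg (by omega : 0 ≤ a - 1),
              abs_of_pos h]; ring
      exact_mod_cast this
    have hd : (d : ℝ) + 1 ≠ 0 := by positivity
    have e : (↑d + 1) * (C * ↑N - |(a : ℝ)|) -
        ((↑d - 0) * ((↑d + 1) * (C * ↑N - |(a : ℝ)|)) +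
              ((↑d + 1) * (C * ↑N - |((a + 1 : ℤ) : ℝ)|) +
                (↑d + 1) * (C * ↑N - |((a - 1 : ℤ) : ℝ)|)) / 2) / (↑d + 1) =
        (|((a + 1 : ℤ) : ℝ)| + |((a - 1 : ℤ) : ℝ)| - 2 * |(a : ℝ)|) / 2 := by
      field_simp
      ring
    rw [e, habs]
    split_ifs <;> norm_num
  · have hs := sig_pos ξ hξ
    have hd : (d : ℝ) + 1 ≠ 0 := by positivity
    simp only [Kop, GG, if_neg hξ]
    by_cases ha : a = 0
    · subst ha
      have : rh ξ = 1 + bet ξ - sig ξ := rfl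
      simp only [zero_add, zero_sub, Int.natAbs_one, Int.natAbs_neg, pow_one, if_true,
        Int.natAbs_zero, pow_zero]
      rw [this]
      field_simp
      ring
    · rw [if_neg ha]
      obtain ⟨n, hn⟩ : ∃ n, a.natAbs = n + 1 := ⟨a.natAbs - 1, by omega⟩
      have hq := rh_quad ξ
      have key : rh ξ ^ (a + 1).natAbs + rh ξ ^ (a - 1).natAbs = rh ξ ^ n * (rh ξ ^ 2 + 1) := by
        rcases lt_or_gt_of_ne ha with h | h
        · rw [show (a + 1).natAbs = n by omega, show (a - 1).natAbs = n + 2 by omega]; ring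
        · rw [show (a + 1).natAbs = n + 2 by omega, show (a - 1).natAbs = n by omega]; ring
      rw [← mul_add, key, hn, hq]
      field_simp
      ring

noncomputable def gg (C : ℝ) : Cyl d N → ℝ := syn (GG C)

lemma gg_green (C : ℝ) (w : Cyl d N) :
    gg C w - Pav d N (gg C) w = if w = 0 then 1 else 0 := by
  have hN : (0 : ℝ) < N := by exact_mod_cast Nat.pos_of_ne_zero (NeZero.ne N)
  unfold gg
  rw [Pav_syn]
  unfold syn
  rw [← mul_sub, ← Finset.sum_sub_distrib]
  simp only [← mul_sub, GG_green]
  rw [← Finset.sum_mul, cc_sum]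
  by_cases h1 : w.1 = 0
  · by_cases h2 : w.2 = 0
    · have hw : w = 0 := Prod.ext h1 h2
      subst hw
      simp only [if_pos h1, if_pos h2, if_true]
      field_simp
    · have hw : w ≠ 0 := fun hc => h2 (by rw [hc]; rfl)
      simp [h2, hw]
  · have hw : w ≠ 0 := fun hc => h1 (by rw [hc]; rfl)
    simp [h1, hw]

lemma gg_hsum (C : ℝ) (a : ℤ) :
    ∑ y : Fin d → ZMod N, gg C (y, a) = (d + 1) * (C * N - |(a : ℝ)|) := by
  have hN : (0 : ℝ) < N := by exact_mod_cast Nat.pos_of_ne_zero (NeZero.ne N)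
  unfold gg syn
  simp only
  rw [← Finset.mul_sum, Finset.sum_comm]
  simp only [← Finset.sum_mul, cc_sum', ite_mul, zero_mul]
  rw [Finset.sum_ite_eq' Finset.univ (0 : Fin d → ZMod N)]
  simp only [Finset.mem_univ, if_true, GG]
  field_simp

end modes

section far
variable {d N : ℕ} [NeZero N]

lemma sig_ge (ξ : Fin d → ZMod N) (i : Fin d) : 4 * (nm (ξ i) : ℝ) / N ≤ sig ξ := by
  have hN : (0 : ℝ) < N := by exact_mod_cast Nat.pos_of_ne_zero (NeZero.ne N)
  have h1 := bet_ge ξ i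
  have h2 := bet_nonneg ξ
  refine Real.le_sqrt_of_sq_le ?_
  have e : (4 * (nm (ξ i) : ℝ) / N) ^ 2 = 2 * (8 * (nm (ξ i) : ℝ) ^ 2 / (N : ℝ) ^ 2) := by
    field_simp; ring
  rw [e]
  nlinarith

lemma rh_le_exp (ξ : Fin d → ZMod N) : rh ξ ≤ Real.exp (-(sig ξ / (2 * d + 2))) := by
  have h1 := rh_mul ξ
  have h2 := bet_nonneg ξ
  have h3 := sig_nonneg ξ
  have h4 := rh_pos ξ
  have h5 := sig_le ξ
  have h6 := bet_le ξ
  have ha : rh ξ ≤ 1 - sig ξ / (1 + sig ξ) := by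
    have e : 1 - sig ξ / (1 + sig ξ) = 1 / (1 + sig ξ) := by field_simp; ring
    rw [e, le_div_iff₀ (by positivity)]
    nlinarith
  have hb : sig ξ / (2 * d + 2) ≤ sig ξ / (1 + sig ξ) :=
    div_le_div_of_nonneg_left h3 (by positivity) (by linarith)
  have hc := Real.add_one_le_exp (-(sig ξ / (2 * d + 2)))
  linarith

/-- the geometric ratio -/
noncomputable def rr (d : ℕ) : ℝ := Real.exp (-(1 / (d * (2 * d + 2))))

noncomputable def Cd (d : ℕ) : ℝ := (d + 1) / 4 * (2 * (1 - rr d)⁻¹) ^ d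

lemma rr_lt_one {d : ℕ} (hd : 1 ≤ d) : rr d < 1 := by
  have : (1 : ℝ) ≤ d := by exact_mod_cast hd
  unfold rr
  rw [Real.exp_lt_one_iff]
  have : (0 : ℝ) < 1 / (d * (2 * d + 2)) := by positivity
  linarith

lemma Cd_nonneg {d : ℕ} (hd : 1 ≤ d) : 0 ≤ Cd d := by
  have := rr_lt_one hd
  unfold Cd
  have : 0 ≤ (1 - rr d)⁻¹ := inv_nonneg.2 (by linarith)
  positivity

lemma GG_nonneg (C : ℝ) (ξ : Fin d → ZMod N) (h : ξ ≠ 0) (a : ℤ) : 0 ≤ GG C ξ a := by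
  have := sig_pos ξ h
  have := rh_pos ξ
  simp only [GG, if_neg h]
  positivity

lemma GG_far (hd : 1 ≤ d) (C : ℝ) (ξ : Fin d → ZMod N) (h : ξ ≠ 0) (a : ℤ)
    (ha : (N : ℝ) ≤ 4 * a.natAbs) :
    GG C ξ a ≤ (d + 1) * N / 4 * ∏ i, rr d ^ nm (ξ i) := by
  have hN : (0 : ℝ) < N := by exact_mod_cast Nat.pos_of_ne_zero (NeZero.ne N)
  have hd0 : (1 : ℝ) ≤ d := by exact_mod_cast hd
  have hs := sig_pos ξ h
  have hr := rh_pos ξ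
  have : Nonempty (Fin d) := ⟨⟨0, hd⟩⟩
  obtain ⟨i, hi⟩ := Finite.exists_max (fun i => nm (ξ i))
  obtain ⟨l, hl⟩ := Function.ne_iff.1 h
  have h1 : (1 : ℝ) ≤ nm (ξ i) := by exact_mod_cast (nm_pos _ hl).trans (hi l)
  have hsi := sig_ge ξ i
  rw [div_le_iff₀ hN] at hsi
  simp only [GG, if_neg h]
  refine mul_le_mul ?_ ?_ (by positivity) (by positivity)
  · rw [div_le_div_iff₀ hs (by norm_num)]
    nlinarith
  · have e1 : ∏ i, rr d ^ nm (ξ i) = Real.exp (-((∑ i, (nm (ξ i) : ℝ)) / (d * (2 * d + 2)))) := by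
      unfold rr
      simp only [← Real.exp_nat_mul]
      rw [← Real.exp_sum]
      congr 1
      rw [Finset.sum_div, ← Finset.sum_neg_distrib]
      refine Finset.sum_congr rfl fun i _ => ?_
      ring
    rw [e1]
    calc rh ξ ^ a.natAbs ≤ Real.exp (-(sig ξ / (2 * d + 2))) ^ a.natAbs := by
          gcongr
          exact rh_le_exp ξ
      _ = Real.exp (-(a.natAbs * sig ξ / (2 * d + 2))) := by
          rw [← Real.exp_nat_mul]; congr 1; ring
      _ ≤ _ := by
          refine Real.exp_le_exp.2 (neg_le_neg ?_)
          have hsum : ∑ i, (nm (ξ i) : ℝ) ≤ d * nm (ξ i) := by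
            have : ∑ l, (nm (ξ l) : ℝ) ≤ ∑ _l : Fin d, (nm (ξ i) : ℝ) :=
              Finset.sum_le_sum fun l _ => by exact_mod_cast hi l
            simpa using this
          rw [div_le_div_iff₀ (by positivity) (by positivity)]
          have h3 : (nm (ξ i) : ℝ) ≤ a.natAbs * sig ξ := by nlinarith
          have : ∑ i, (nm (ξ i) : ℝ) ≤ a.natAbs * sig ξ * d := by nlinarith
          nlinarith

lemma sum_far (hd : 1 ≤ d) (C : ℝ) (a : ℤ) (ha : (N : ℝ) ≤ 4 * a.natAbs) :
    ∑ ξ ∈ Finset.univ.erase (0 : Fin d → ZMod N), GG C ξ a ≤ Cd d * N := by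
  have hN : (0 : ℝ) < N := by exact_mod_cast Nat.pos_of_ne_zero (NeZero.ne N)
  have hr := rr_lt_one hd
  have hr0 : 0 < rr d := Real.exp_pos _
  calc ∑ ξ ∈ Finset.univ.erase (0 : Fin d → ZMod N), GG C ξ a
      ≤ ∑ ξ ∈ Finset.univ.erase (0 : Fin d → ZMod N), (d + 1) * N / 4 * ∏ i, rr d ^ nm (ξ i) :=
        Finset.sum_le_sum fun ξ hξ => GG_far hd C ξ (Finset.ne_of_mem_erase hξ) a ha
    _ ≤ ∑ ξ : Fin d → ZMod N, (d + 1) * N / 4 * ∏ i, rr d ^ nm (ξ i) :=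
        Finset.sum_le_sum_of_subset_of_nonneg (Finset.subset_univ _) fun ξ _ _ => by positivity
    _ = (d + 1) * N / 4 * (∑ k : ZMod N, rr d ^ nm k) ^ d := by
        rw [← Finset.mul_sum]
        congr 1
        have h := Finset.prod_univ_sum (fun _ : Fin d => (Finset.univ : Finset (ZMod N)))
          (fun _ k => rr d ^ nm k)
        rw [Fintype.piFinset_univ] at h
        rw [← h]; simp
    _ ≤ (d + 1) * N / 4 * (2 * (1 - rr d)⁻¹) ^ d := by
        gcongr
        refine (sum_nm_le (fun v => rr d ^ v) fun v => by positivity).trans ?_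
        gcongr
        rw [← tsum_geometric_of_lt_one hr0.le hr]
        exact (summable_geometric_of_lt_one hr0.le hr).sum_le_tsum _ fun v _ => by positivity
    _ = Cd d * N := by unfold Cd; ring

lemma cc_zero (y : Fin d → ZMod N) : cc 0 y = 1 := by simp [cc, cs_zero]

lemma syn_split (f : (Fin d → ZMod N) → ℤ → ℝ) (w : Cyl d N) :
    syn f w = ((N : ℝ) ^ d)⁻¹ * (f 0 w.2 +
      ∑ ξ ∈ Finset.univ.erase (0 : Fin d → ZMod N), cc ξ w.1 * f ξ w.2) := by
  unfold syn
  rw [← Finset.add_sum_erase _ _ (Finset.mem_univ (0 : Fin d → ZMod N)), cc_zero, one_mul]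

lemma abs_rest (hd : 1 ≤ d) (C : ℝ) (w : Cyl d N) (ha : (N : ℝ) ≤ 4 * w.2.natAbs) :
    |∑ ξ ∈ Finset.univ.erase (0 : Fin d → ZMod N), cc ξ w.1 * GG C ξ w.2| ≤ Cd d * N := by
  refine (Finset.abs_sum_le_sum_abs _ _).trans (le_trans ?_ (sum_far hd C w.2 ha))
  refine Finset.sum_le_sum fun ξ hξ => ?_
  have h0 := GG_nonneg C ξ (Finset.ne_of_mem_erase hξ) w.2
  rw [abs_mul, abs_of_nonneg h0]
  have := abs_cc_le ξ w.1
  nlinarith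

/-- the constant in the zero mode -/
noncomputable def Cp (d : ℕ) : ℝ := Cd d + 4

lemma gg_far (hd : 1 ≤ d) (w : Cyl d N) (ha : (N : ℝ) ≤ 4 * w.2.natAbs) :
    gg (Cp d) w ≤ ((d + 1) * Cp d + Cd d) * N / (N : ℝ) ^ d := by
  have hN : (0 : ℝ) < N := by exact_mod_cast Nat.pos_of_ne_zero (NeZero.ne N)
  unfold gg
  rw [syn_split, mul_comm, ← div_eq_mul_inv]
  refine div_le_div_of_nonneg_right ?_ (by positivity)
  have h1 := (abs_le.1 (abs_rest hd (Cp d) w ha)).2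
  have h2 : GG (Cp d) (0 : Fin d → ZMod N) w.2 ≤ (d + 1) * Cp d * N := by
    simp only [GG, if_true]
    have := abs_nonneg (w.2 : ℝ)
    have hd0 : (0 : ℝ) ≤ d := by positivity
    nlinarith
  linarith

lemma gg_nonneg (hd : 1 ≤ d) (w : Cyl d N) (h1 : -(4 * (N : ℤ)) ≤ w.2) (h2 : w.2 ≤ 4 * (N : ℤ)) :
    0 ≤ gg (Cp d) w := by
  have hN : (0 : ℝ) < N := by exact_mod_cast Nat.pos_of_ne_zero (NeZero.ne N)
  refine min_principle (gg (Cp d)) (-(4 * (N : ℤ))) (4 * (N : ℤ)) (fun z _ _ => ?_)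
    (fun z hz => ?_) w h1 h2
  · have := gg_green (Cp d) z
    split_ifs at this <;> linarith
  · have habs : z.2.natAbs = 4 * N := by omega
    have hC := Cd_nonneg hd
    unfold gg
    rw [syn_split]
    refine mul_nonneg (by positivity) ?_
    have h1 := (abs_le.1 (abs_rest hd (Cp d) z (by rw [habs]; push_cast; linarith))).1
    have h2 : GG (Cp d) (0 : Fin d → ZMod N) z.2 = (d + 1) * (Cd d * N) := by
      simp only [GG, if_true]
      have : |(z.2 : ℝ)| = 4 * N := by
        rw [← Int.cast_abs, Int.abs_eq_natAbs, habs]; push_cast; ring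
      rw [this, Cp]; ring
    rw [h2]
    have : 0 ≤ (d : ℝ) * (Cd d * N) := by positivity
    nlinarith

end far

lemma exp_neg_le_rpow {x : ℝ} (hx : 0 < x) : Real.exp (-x) ≤ x ^ (-(1 / 4) : ℝ) := by
  rw [Real.exp_neg, Real.rpow_neg hx.le]
  refine inv_anti₀ (by positivity) ?_
  rcases le_total x 1 with h | h
  · exact (Real.rpow_le_one hx.le h (by norm_num)).trans (Real.one_le_exp hx.le)
  · calc x ^ (1 / 4 : ℝ) ≤ x ^ (1 : ℝ) := Real.rpow_le_rpow_of_exponent_le h (by norm_num)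
      _ = x := Real.rpow_one x
      _ ≤ Real.exp x := by linarith [Real.add_one_le_exp x]

lemma sum_rpow_le (M : ℕ) :
    ∑ v ∈ Finset.range M, ((1 : ℝ) + v) ^ (-(5 / 6) : ℝ) ≤ 6 * (M : ℝ) ^ (1 / 6 : ℝ) := by
  induction M with
  | zero => simp
  | succ M ih =>
    rw [Finset.sum_range_succ]
    have hM : (0 : ℝ) < (M : ℝ) + 1 := by positivity
    have hb := rpow_one_add_le_one_add_mul_self (s := -(1 / ((M : ℝ) + 1))) (by
      rw [neg_le_neg_iff, div_le_one hM]; linarith [(Nat.cast_nonneg M : (0 : ℝ) ≤ M)])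
      (p := 1 / 6) (by norm_num) (by norm_num)
    have e1 : (1 : ℝ) + -(1 / ((M : ℝ) + 1)) = M / (M + 1) := by field_simp; ring
    rw [e1, Real.div_rpow (by positivity) hM.le, div_le_iff₀ (by positivity)] at hb
    have e2 : ((1 : ℝ) + M) ^ (-(5 / 6) : ℝ) = ((M : ℝ) + 1) ^ (1 / 6 : ℝ) / (M + 1) := by
      rw [add_comm, show (-(5 / 6) : ℝ) = 1 / 6 - 1 by norm_num, Real.rpow_sub_one hM.ne']
    rw [e2]
    push_cast
    have e3 : (1 + 1 / 6 * -(1 / ((M : ℝ) + 1))) * ((M : ℝ) + 1) ^ (1 / 6 : ℝ) =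
      ((M : ℝ) + 1) ^ (1 / 6 : ℝ) - ((M : ℝ) + 1) ^ (1 / 6 : ℝ) / (M + 1) / 6 := by ring
    linarith

section near
variable {d N : ℕ} [NeZero N]

lemma one_dim_sum : ∑ k : ZMod N, (N : ℝ)⁻¹ * ((N : ℝ) / (1 + nm k)) ^ (5 / 6 : ℝ) ≤ 24 := by
  have hN : (0 : ℝ) < N := by exact_mod_cast Nat.pos_of_ne_zero (NeZero.ne N)
  have hN1 : (1 : ℝ) ≤ N := by exact_mod_cast Nat.pos_of_ne_zero (NeZero.ne N)
  have h1 := sum_nm_le (N := N) (fun v => (N : ℝ)⁻¹ * ((N : ℝ) / (1 + v)) ^ (5 / 6 : ℝ))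
    (fun v => by positivity)
  refine h1.trans ?_
  have h2 : ∀ v : ℕ, (N : ℝ)⁻¹ * ((N : ℝ) / (1 + v)) ^ (5 / 6 : ℝ) =
      ((N : ℝ)⁻¹ * (N : ℝ) ^ (5 / 6 : ℝ)) * ((1 : ℝ) + v) ^ (-(5 / 6) : ℝ) := by
    intro v
    rw [Real.div_rpow hN.le (by positivity), Real.rpow_neg (by positivity)]
    ring
  rw [Finset.sum_congr rfl fun v _ => h2 v, ← Finset.mul_sum]
  have h3 := sum_rpow_le (N + 1)
  have h4 : ((N + 1 : ℕ) : ℝ) ^ (1 / 6 : ℝ) ≤ 2 * (N : ℝ) ^ (1 / 6 : ℝ) := by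
    calc ((N + 1 : ℕ) : ℝ) ^ (1 / 6 : ℝ) ≤ (2 * N : ℝ) ^ (1 / 6 : ℝ) := by
          refine Real.rpow_le_rpow (by positivity) (by push_cast; linarith) (by norm_num)
      _ = (2 : ℝ) ^ (1 / 6 : ℝ) * (N : ℝ) ^ (1 / 6 : ℝ) := Real.mul_rpow (by norm_num) hN.le
      _ ≤ 2 * (N : ℝ) ^ (1 / 6 : ℝ) := by
          gcongr
          calc (2 : ℝ) ^ (1 / 6 : ℝ) ≤ 2 ^ (1 : ℝ) :=
                Real.rpow_le_rpow_of_exponent_le (by norm_num) (by norm_num)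
            _ = 2 := Real.rpow_one 2
  have h5 : (N : ℝ)⁻¹ * (N : ℝ) ^ (5 / 6 : ℝ) * (N : ℝ) ^ (1 / 6 : ℝ) = 1 := by
    rw [mul_assoc, ← Real.rpow_add hN]
    norm_num
  have h6 : 0 ≤ (N : ℝ)⁻¹ * (N : ℝ) ^ (5 / 6 : ℝ) := by positivity
  nlinarith [mul_le_mul_of_nonneg_left (h3.trans (mul_le_mul_of_nonneg_left h4 (by norm_num))) h6]

lemma bet_rpow_le (hN2 : 2 ≤ N) (J : Finset (Fin d)) (hJ : J.Nonempty) (t : ℝ)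
    (ht : 0 ≤ t) (htJ : 2 * t ≤ 5 / 6 * J.card) (ξ : Fin d → ZMod N) (hξ : ξ ≠ 0) :
    bet ξ ^ (-t) ≤ ∏ i ∈ J, ((N : ℝ) / (1 + nm (ξ i))) ^ (5 / 6 : ℝ) := by
  have hN : (0 : ℝ) < N := by exact_mod_cast Nat.pos_of_ne_zero (NeZero.ne N)
  have hβ := bet_pos ξ hξ
  obtain ⟨l, hl⟩ := Function.ne_iff.1 hξ
  have hl1 : (1 : ℝ) ≤ nm (ξ l) := by exact_mod_cast nm_pos _ hl
  have hX : ∀ i, (bet ξ)⁻¹ ≤ ((N : ℝ) / (1 + nm (ξ i))) ^ 2 := by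
    intro i
    rw [div_pow, inv_le_comm₀ hβ (by positivity), inv_div]
    have key : (1 + (nm (ξ i) : ℝ)) ^ 2 / (N : ℝ) ^ 2 ≤ bet ξ := by
      by_cases hi : ξ i = 0
      · refine le_trans ?_ (bet_ge ξ l)
        have : nm (ξ i) = 0 := by rw [hi]; simp [nm]
        rw [this]
        refine div_le_div_of_nonneg_right ?_ (by positivity)
        push_cast
        nlinarith
      · have hi1 : (1 : ℝ) ≤ nm (ξ i) := by exact_mod_cast nm_pos _ hi
        refine le_trans ?_ (bet_ge ξ i)
        refine div_le_div_of_nonneg_right ?_ (by positivity)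
        nlinarith
    exact key
  have hX1 : ∀ i, 1 ≤ (N : ℝ) / (1 + nm (ξ i)) := by
    intro i
    rw [one_le_div (by positivity)]
    have := nm_le (ξ i)
    have : 1 + nm (ξ i) ≤ N := by omega
    exact_mod_cast this
  obtain ⟨i0, hi0, hmin⟩ := J.exists_min_image (fun i => (N : ℝ) / (1 + nm (ξ i))) hJ
  set L := (N : ℝ) / (1 + nm (ξ i0)) with hL
  have hL1 : 1 ≤ L := hX1 i0
  calc bet ξ ^ (-t) = ((bet ξ)⁻¹) ^ t := by rw [Real.rpow_neg hβ.le, Real.inv_rpow hβ.le]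
    _ ≤ (L ^ 2) ^ t := Real.rpow_le_rpow (by positivity) (hX i0) ht
    _ = L ^ (2 * t) := by
        rw [← Real.rpow_natCast L 2, ← Real.rpow_mul (by positivity)]; norm_num
    _ ≤ L ^ (5 / 6 * (J.card : ℝ)) := Real.rpow_le_rpow_of_exponent_le hL1 htJ
    _ = ∏ _i ∈ J, L ^ (5 / 6 : ℝ) := by
        rw [Finset.prod_const, Real.rpow_mul (by positivity), Real.rpow_natCast]
    _ ≤ _ := by
        refine Finset.prod_le_prod (fun _ _ => by positivity) fun i hi => ?_
        exact Real.rpow_le_rpow (by positivity) (hmin i hi) (by norm_num)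

/-- lazy version of the walk operator on the modes -/
noncomputable def Kl (f : (Fin d → ZMod N) → ℤ → ℝ) (ξ : Fin d → ZMod N) (a : ℤ) : ℝ :=
  (f ξ a + Kop f ξ a) / 2

noncomputable def Gn (C : ℝ) : ℕ → (Fin d → ZMod N) → ℤ → ℝ
  | 0 => GG C
  | n + 1 => Kl (Gn C n)

lemma syn_Kl (f : (Fin d → ZMod N) → ℤ → ℝ) (w : Cyl d N) :
    syn (Kl f) w = (syn f w + Pav d N (syn f) w) / 2 := by
  rw [Pav_syn]
  unfold syn Kl
  rw [← mul_add, ← Finset.sum_add_distrib, mul_div_assoc, Finset.sum_div]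
  congr 1
  exact Finset.sum_congr rfl fun ξ _ => by ring

lemma abs_Kl_le (f : (Fin d → ZMod N) → ℤ → ℝ) (ξ : Fin d → ZMod N) (a : ℤ) :
    |Kl f ξ a| ≤ (1 + (d - bet ξ) / (d + 1)) / 2 * |f ξ a| +
      1 / (4 * (d + 1)) * (|f ξ (a + 1)| + |f ξ (a - 1)|) := by
  have hβ := bet_le ξ
  have hd : (0 : ℝ) ≤ d := by positivity
  have h0 : 0 ≤ (1 + (d - bet ξ) / (d + 1)) / 2 := by
    have : 1 + (d - bet ξ) / (d + 1) = (2 * d + 1 - bet ξ) / (d + 1) := by field_simp; ring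
    rw [this]
    have : 0 ≤ 2 * d + 1 - bet ξ := by linarith
    positivity
  have e : Kl f ξ a = (1 + (d - bet ξ) / (d + 1)) / 2 * f ξ a +
      1 / (4 * (d + 1)) * (f ξ (a + 1) + f ξ (a - 1)) := by
    unfold Kl Kop
    field_simp
    ring
  rw [e]
  refine (abs_add_le _ _).trans ?_
  rw [abs_mul, abs_mul, abs_of_nonneg h0, abs_of_nonneg (by positivity : (0 : ℝ) ≤ 1 / (4 * (d + 1)))]
  gcongr
  exact abs_add_le _ _

lemma Gn_sum_le (C : ℝ) (ξ : Fin d → ZMod N) (W : Finset ℤ) (B : ℝ)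
    (h : ∀ a : ℤ, ∑ a' ∈ W, |GG C ξ (a - a')| ≤ B) (n : ℕ) :
    ∀ a : ℤ, ∑ a' ∈ W, |Gn C n ξ (a - a')| ≤ (1 - bet ξ / (2 * (d + 1))) ^ n * B := by
  induction n with
  | zero => intro a; simpa [Gn] using h a
  | succ n ih =>
    intro a
    have hβ := bet_le ξ
    have hd : (0 : ℝ) ≤ d := by positivity
    have h0 : 0 ≤ (1 + (d - bet ξ) / (d + 1)) / 2 := by
      have : 1 + (d - bet ξ) / (d + 1) = (2 * d + 1 - bet ξ) / (d + 1) := by field_simp; ring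
      rw [this]
      have : 0 ≤ 2 * d + 1 - bet ξ := by linarith
      positivity
    set X := (1 - bet ξ / (2 * (d + 1))) ^ n * B with hX
    have h1 := ih a
    have h2 := ih (a + 1)
    have h3 := ih (a - 1)
    calc ∑ a' ∈ W, |Gn C (n + 1) ξ (a - a')|
        ≤ ∑ a' ∈ W, ((1 + (d - bet ξ) / (d + 1)) / 2 * |Gn C n ξ (a - a')| +
          1 / (4 * (d + 1)) * (|Gn C n ξ (a + 1 - a')| + |Gn C n ξ (a - 1 - a')|)) := by
          refine Finset.sum_le_sum fun a' _ => ?_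
          have := abs_Kl_le (Gn C n) ξ (a - a')
          rwa [show a - a' + 1 = a + 1 - a' by ring, show a - a' - 1 = a - 1 - a' by ring] at this
      _ = (1 + (d - bet ξ) / (d + 1)) / 2 * ∑ a' ∈ W, |Gn C n ξ (a - a')| +
          1 / (4 * (d + 1)) * (∑ a' ∈ W, |Gn C n ξ (a + 1 - a')| +
            ∑ a' ∈ W, |Gn C n ξ (a - 1 - a')|) := by
          rw [Finset.sum_add_distrib, ← Finset.mul_sum, ← Finset.mul_sum, Finset.sum_add_distrib]
      _ ≤ (1 + (d - bet ξ) / (d + 1)) / 2 * X + 1 / (4 * (d + 1)) * (X + X) := by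
          gcongr
      _ = (1 - bet ξ / (2 * (d + 1))) ^ (n + 1) * B := by
          have : (1 - bet ξ / (2 * (d + 1))) ^ (n + 1) * B = (1 - bet ξ / (2 * (d + 1))) * X := by
            rw [hX, pow_succ]; ring
          rw [this]
          field_simp
          ring

lemma Gn_zero_le (C : ℝ) (hC : 0 ≤ C) (n : ℕ) (a : ℤ) :
    |Gn C n (0 : Fin d → ZMod N) a| ≤ (d + 1) * (C * N + |(a : ℝ)| + n) := by
  induction n generalizing a with
  | zero =>
    simp only [Gn, GG, if_true]
    rw [abs_mul, abs_of_nonneg (by positivity : (0 : ℝ) ≤ d + 1)]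
    gcongr
    refine (abs_sub _ _).trans ?_
    rw [abs_of_nonneg (by positivity : 0 ≤ C * N), abs_abs]
    simp
  | succ n ih =>
    refine (abs_Kl_le (Gn C n) 0 a).trans ?_
    rw [bet_zero]
    have h1 := ih a
    have h2 := ih (a + 1)
    have h3 := ih (a - 1)
    have hp : |((a + 1 : ℤ) : ℝ)| ≤ |(a : ℝ)| + 1 := by
      push_cast
      exact (abs_add_le _ _).trans (by simp)
    have hm : |((a - 1 : ℤ) : ℝ)| ≤ |(a : ℝ)| + 1 := by
      push_cast
      exact (abs_sub _ _).trans (by simp)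
    set Y := (d + 1 : ℝ) * (C * N + |(a : ℝ)| + (n + 1 : ℕ)) with hY
    have hd : (0 : ℝ) ≤ d := by positivity
    have h1' : |Gn C n (0 : Fin d → ZMod N) a| ≤ Y := by
      refine h1.trans ?_
      rw [hY]; push_cast; gcongr; linarith
    have h2' : |Gn C n (0 : Fin d → ZMod N) (a + 1)| ≤ Y := by
      refine h2.trans ?_
      rw [hY]; push_cast at hp ⊢; gcongr ?_ * ?_; linarith
    have h3' : |Gn C n (0 : Fin d → ZMod N) (a - 1)| ≤ Y := by
      refine h3.trans ?_
      rw [hY]; push_cast at hm ⊢; gcongr ?_ * ?_; linarith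
    calc _ ≤ (1 + ((d : ℝ) - 0) / (d + 1)) / 2 * Y + 1 / (4 * (d + 1)) * (Y + Y) := by
          gcongr
      _ = Y := by field_simp; ring

lemma GG_le_single (C : ℝ) (ξ : Fin d → ZMod N) (hξ : ξ ≠ 0) (a : ℤ) :
    |GG C ξ a| ≤ (d + 1) * bet ξ ^ (-(1 / 2) : ℝ) := by
  have hβ := bet_pos ξ hξ
  have hs := sig_pos ξ hξ
  have hr := rh_pos ξ
  have hr1 := rh_lt_one ξ hξ
  rw [abs_of_nonneg (GG_nonneg C ξ hξ a)]
  simp only [GG, if_neg hξ]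
  rw [Real.rpow_neg hβ.le, ← Real.sqrt_eq_rpow, ← div_eq_mul_inv]
  have h1 : Real.sqrt (bet ξ) ≤ sig ξ := Real.sqrt_le_sqrt (by nlinarith)
  have h2 : rh ξ ^ a.natAbs ≤ 1 := pow_le_one₀ hr.le hr1.le
  calc (d + 1) / sig ξ * rh ξ ^ a.natAbs ≤ (d + 1) / sig ξ * 1 := by gcongr
    _ = (d + 1) / sig ξ := mul_one _
    _ ≤ (d + 1) / Real.sqrt (bet ξ) := by
        refine div_le_div_of_nonneg_left (by positivity) (Real.sqrt_pos.2 hβ) h1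

lemma sum_natAbs_le {φ : ℕ → ℝ} (hφ : ∀ v, 0 ≤ φ v) (hs : Summable φ) (W : Finset ℤ) (a : ℤ) :
    ∑ a' ∈ W, φ (a - a').natAbs ≤ 2 * ∑' v, φ v := by
  rw [← Finset.sum_filter_add_sum_filter_not W (fun a' => a' ≤ a), two_mul]
  have key : ∀ S : Finset ℤ, Set.InjOn (fun a' : ℤ => (a - a').natAbs) S →
      ∑ a' ∈ S, φ (a - a').natAbs ≤ ∑' v, φ v := by
    intro S hS
    rw [← Finset.sum_image (f := φ) (g := fun a' : ℤ => (a - a').natAbs) hS]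
    exact hs.sum_le_tsum _ fun v _ => hφ v
  refine add_le_add (key _ ?_) (key _ ?_)
  · intro x hx y hy h
    simp only [Finset.coe_filter, Set.mem_ofPred_eq] at hx hy h
    omega
  · intro x hx y hy h
    simp only [Finset.coe_filter, Set.mem_ofPred_eq] at hx hy h
    omega

lemma GG_le_sum (C : ℝ) (ξ : Fin d → ZMod N) (hξ : ξ ≠ 0) (W : Finset ℤ) (a : ℤ) :
    ∑ a' ∈ W, |GG C ξ (a - a')| ≤ (2 * (d + 1)) * bet ξ ^ (-1 : ℝ) := by
  have hβ := bet_pos ξ hξ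
  have hs := sig_pos ξ hξ
  have hr := rh_pos ξ
  have hr1 := rh_lt_one ξ hξ
  have hsq := sig_sq ξ
  have h1 : ∑ a' ∈ W, |GG C ξ (a - a')| = (d + 1) / sig ξ * ∑ a' ∈ W, rh ξ ^ (a - a').natAbs := by
    rw [Finset.mul_sum]
    refine Finset.sum_congr rfl fun a' _ => ?_
    rw [abs_of_nonneg (GG_nonneg C ξ hξ _)]
    simp only [GG, if_neg hξ]
  have h2 := sum_natAbs_le (φ := fun v => rh ξ ^ v) (fun v => by positivity)
    (summable_geometric_of_lt_one hr.le hr1) W a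
  rw [tsum_geometric_of_lt_one hr.le hr1] at h2
  have h3 : (1 - rh ξ)⁻¹ ≤ sig ξ / bet ξ := by
    have e : 1 - rh ξ = sig ξ - bet ξ := by unfold rh; ring
    have hpos : 0 < sig ξ - bet ξ := by rw [← e]; linarith
    have hsl := sig_le ξ
    rw [e]
    rw [inv_eq_one_div, div_le_div_iff₀ hpos hβ]
    nlinarith
  rw [h1, Real.rpow_neg_one]
  calc (d + 1) / sig ξ * ∑ a' ∈ W, rh ξ ^ (a - a').natAbs
      ≤ (d + 1) / sig ξ * (2 * (sig ξ / bet ξ)) := by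
        gcongr
        linarith
    _ = 2 * (d + 1) * (bet ξ)⁻¹ := by field_simp

end near

section nearsum
variable {d N : ℕ} [NeZero N]

noncomputable def TT (J : Finset (Fin d)) (y : Fin d → ZMod N) (i : Fin d) : Finset (ZMod N) :=
  if i ∈ J then {y i} else Finset.univ

noncomputable def FF (J : Finset (Fin d)) (y : Fin d → ZMod N) (W : Finset ℤ) :
    Finset (Cyl d N) := (Fintype.piFinset (TT J y)) ×ˢ W

lemma factor_le (J : Finset (Fin d)) (y : Fin d → ZMod N) (i : Fin d) (k w : ZMod N) :
    (N : ℝ)⁻¹ * |∑ t ∈ TT J y i, cs k (w - t)| ≤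
      if i ∈ J then (N : ℝ)⁻¹ else if k = 0 then 1 else 0 := by
  have hN : (N : ℝ) ≠ 0 := by exact_mod_cast NeZero.ne N
  unfold TT
  by_cases hi : i ∈ J
  · rw [if_pos hi, if_pos hi, Finset.sum_singleton]
    exact mul_le_of_le_one_right (by positivity) (abs_cs_le _ _)
  · rw [if_neg hi, if_neg hi]
    have : ∑ t : ZMod N, cs k (w - t) = ∑ t : ZMod N, cs k t :=
      Fintype.sum_equiv (Equiv.subLeft w) _ _ (fun t => rfl)
    rw [this, cs_sum']
    by_cases hk : k = 0
    · simp [hk, hN]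
    · simp [hk]

lemma sum_FF (f : (Fin d → ZMod N) → ℤ → ℝ) (J : Finset (Fin d)) (y : Fin d → ZMod N)
    (W : Finset ℤ) (z : Cyl d N) :
    ∑ x ∈ FF J y W, syn f (z - x) ≤
      ∑ ξ : Fin d → ZMod N, (∏ i, if i ∈ J then (N : ℝ)⁻¹ else if ξ i = 0 then 1 else 0) *
        ∑ a' ∈ W, |f ξ (z.2 - a')| := by
  have e : ∑ x ∈ FF J y W, syn f (z - x) =
      ∑ ξ : Fin d → ZMod N, (∏ i, ((N : ℝ)⁻¹ * ∑ t ∈ TT J y i, cs (ξ i) (z.1 i - t))) *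
        ∑ a' ∈ W, f ξ (z.2 - a') := by
    unfold syn
    rw [← Finset.mul_sum, Finset.sum_comm, Finset.mul_sum]
    refine Finset.sum_congr rfl fun ξ _ => ?_
    rw [Finset.prod_mul_distrib, Finset.prod_const, Finset.card_univ, Fintype.card_fin,
      Finset.prod_univ_sum, inv_pow, mul_assoc, Finset.sum_mul_sum]
    congr 1
    unfold FF
    rw [Finset.sum_product]
    rfl
  rw [e]
  refine Finset.sum_le_sum fun ξ _ => ?_
  refine (le_abs_self _).trans ?_
  rw [abs_mul, Finset.abs_prod]
  refine mul_le_mul ?_ (Finset.abs_sum_le_sum_abs _ _) (abs_nonneg _) ?_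
  · refine Finset.prod_le_prod (fun _ _ => abs_nonneg _) fun i _ => ?_
    rw [abs_mul, abs_of_nonneg (by positivity : 0 ≤ (N : ℝ)⁻¹)]
    exact factor_le J y i (ξ i) (z.1 i)
  · refine Finset.prod_nonneg fun i _ => ?_
    split_ifs <;> positivity

lemma wprod_sum (J : Finset (Fin d)) :
    ∑ ξ : Fin d → ZMod N, (∏ i, if i ∈ J then (N : ℝ)⁻¹ * ((N : ℝ) / (1 + nm (ξ i))) ^ (5 / 6 : ℝ)
      else if ξ i = 0 then 1 else 0) ≤ 24 ^ d := by
  have := Finset.prod_univ_sum (fun _ : Fin d => (Finset.univ : Finset (ZMod N)))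
    (fun i k => if i ∈ J then (N : ℝ)⁻¹ * ((N : ℝ) / (1 + nm k)) ^ (5 / 6 : ℝ)
      else if k = 0 then 1 else 0)
  rw [Fintype.piFinset_univ] at this
  rw [← this]
  calc _ ≤ ∏ _i : Fin d, (24 : ℝ) := by
        refine Finset.prod_le_prod (fun i _ => Finset.sum_nonneg fun k _ => ?_) fun i _ => ?_
        · split_ifs <;> positivity
        · by_cases hi : i ∈ J
          · simp only [hi, if_true]; exact one_dim_sum
          · simp only [hi, if_false]; simp
    _ = 24 ^ d := by simp

lemma wprod_zero (J : Finset (Fin d)) :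
    (∏ i, if i ∈ J then (N : ℝ)⁻¹ else if (0 : Fin d → ZMod N) i = 0 then (1 : ℝ) else 0) =
      ((N : ℝ)⁻¹) ^ J.card := by
  simp

lemma near_abs (J : Finset (Fin d)) (y : Fin d → ZMod N) (W : Finset ℤ) (z : Cyl d N)
    (hN2 : 2 ≤ N) (hJ : J.Nonempty) (C : ℝ) (n : ℕ) (hn : 1 ≤ n) (D s t Z : ℝ) (hD : 0 ≤ D)
    (hs : 0 ≤ s) (hst : t = s + 1 / 4) (htJ : 2 * t ≤ 5 / 6 * J.card)
    (hB : ∀ ξ : Fin d → ZMod N, ξ ≠ 0 → ∀ a : ℤ, ∑ a' ∈ W, |GG C ξ (a - a')| ≤ D * bet ξ ^ (-s))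
    (hZ : ((N : ℝ)⁻¹) ^ J.card * ∑ a' ∈ W, |Gn C n (0 : Fin d → ZMod N) (z.2 - a')| ≤ Z) :
    ∑ x ∈ FF J y W, syn (Gn C n) (z - x) ≤
      Z + D * ((n : ℝ) / (2 * (d + 1))) ^ (-(1 / 4) : ℝ) * 24 ^ d := by
  have hn0 : (0 : ℝ) < n := by exact_mod_cast hn
  refine (sum_FF _ J y W z).trans ?_
  rw [← Finset.add_sum_erase _ _ (Finset.mem_univ (0 : Fin d → ZMod N))]
  refine add_le_add ?_ ?_
  · rw [wprod_zero]; exact hZ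
  set M := D * ((n : ℝ) / (2 * (d + 1))) ^ (-(1 / 4) : ℝ) with hM
  have hM0 : 0 ≤ M := by positivity
  have key : ∀ ξ ∈ Finset.univ.erase (0 : Fin d → ZMod N),
      (∏ i, if i ∈ J then (N : ℝ)⁻¹ else if ξ i = 0 then (1 : ℝ) else 0) *
        ∑ a' ∈ W, |Gn C n ξ (z.2 - a')| ≤
      M * (∏ i, if i ∈ J then (N : ℝ)⁻¹ * ((N : ℝ) / (1 + nm (ξ i))) ^ (5 / 6 : ℝ)
      else if ξ i = 0 then 1 else 0) := by
    intro ξ hξ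
    have hξ0 : ξ ≠ 0 := Finset.ne_of_mem_erase hξ
    have hβ := bet_pos ξ hξ0
    have h1 := Gn_sum_le C ξ W _ (hB ξ hξ0) n z.2
    have h2 : (1 - bet ξ / (2 * (d + 1))) ^ n ≤
        ((n : ℝ) / (2 * (d + 1))) ^ (-(1 / 4) : ℝ) * bet ξ ^ (-(1 / 4) : ℝ) := by
      rw [← Real.mul_rpow (by positivity) hβ.le]
      refine le_trans ?_ (exp_neg_le_rpow (by positivity))
      have hb : 0 ≤ 1 - bet ξ / (2 * (d + 1)) := by
        rw [sub_nonneg, div_le_one (by positivity)]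
        linarith [bet_le ξ]
      calc (1 - bet ξ / (2 * (d + 1))) ^ n ≤ (Real.exp (-(bet ξ / (2 * (d + 1))))) ^ n :=
            pow_le_pow_left₀ hb (Real.one_sub_le_exp_neg _) n
        _ = _ := by rw [← Real.exp_nat_mul]; congr 1; ring
    have h3 : bet ξ ^ (-(1 / 4) : ℝ) * bet ξ ^ (-s) = bet ξ ^ (-t) := by
      rw [← Real.rpow_add hβ, hst]; congr 1; ring
    have h4 := bet_rpow_le hN2 J hJ t (by linarith) htJ ξ hξ0
    have h5 : ∑ a' ∈ W, |Gn C n ξ (z.2 - a')| ≤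
        M * ∏ i ∈ J, ((N : ℝ) / (1 + nm (ξ i))) ^ (5 / 6 : ℝ) := by
      refine h1.trans ?_
      calc _ ≤ ((n : ℝ) / (2 * (d + 1))) ^ (-(1 / 4) : ℝ) * bet ξ ^ (-(1 / 4) : ℝ) *
            (D * bet ξ ^ (-s)) := by gcongr
        _ = M * bet ξ ^ (-t) := by rw [← h3, hM]; ring
        _ ≤ _ := by gcongr
    have h6 : (∏ i, if i ∈ J then (N : ℝ)⁻¹ * ((N : ℝ) / (1 + nm (ξ i))) ^ (5 / 6 : ℝ)
        else if ξ i = 0 then 1 else 0) =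
        (∏ i, if i ∈ J then (N : ℝ)⁻¹ else if ξ i = 0 then (1 : ℝ) else 0) *
          ∏ i ∈ J, ((N : ℝ) / (1 + nm (ξ i))) ^ (5 / 6 : ℝ) := by
      have h8 : ∏ i ∈ J, ((N : ℝ) / (1 + nm (ξ i))) ^ (5 / 6 : ℝ) =
          ∏ i, if i ∈ J then ((N : ℝ) / (1 + nm (ξ i))) ^ (5 / 6 : ℝ) else 1 := by
        rw [Finset.prod_ite_mem, Finset.univ_inter]
      rw [h8, ← Finset.prod_mul_distrib]
      refine Finset.prod_congr rfl fun i _ => ?_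
      by_cases hi : i ∈ J
      · simp only [hi, if_true]
      · simp only [hi, if_false, mul_one]
    rw [h6]
    have h7 : 0 ≤ (∏ i, if i ∈ J then (N : ℝ)⁻¹ else if ξ i = 0 then (1 : ℝ) else 0) := by
      refine Finset.prod_nonneg fun i _ => ?_
      split_ifs <;> positivity
    calc _ ≤ (∏ i, if i ∈ J then (N : ℝ)⁻¹ else if ξ i = 0 then (1 : ℝ) else 0) *
          (M * ∏ i ∈ J, ((N : ℝ) / (1 + nm (ξ i))) ^ (5 / 6 : ℝ)) := by gcongr
      _ = _ := by ring
  refine (Finset.sum_le_sum key).trans ?_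
  rw [← Finset.mul_sum]
  refine mul_le_mul_of_nonneg_left ?_ hM0
  refine le_trans ?_ (wprod_sum (N := N) J)
  refine Finset.sum_le_sum_of_subset_of_nonneg (Finset.erase_subset _ _) fun ξ _ _ => ?_
  refine Finset.prod_nonneg fun i _ => ?_
  split_ifs <;> positivity

lemma near_bound (C : ℝ) (hC : 0 ≤ C) (J : Finset (Fin d)) (y : Fin d → ZMod N) (W : Finset ℤ)
    (z : Cyl d N) (hN2 : 2 ≤ N) (n : ℕ) (hn : 1 ≤ n) (hnN : n ≤ N)
    (hW : (W.card ≤ 1 ∧ 2 ≤ J.card) ∨ (W.card ≤ 3 * N ∧ 3 ≤ J.card))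
    (hz : ∀ a' ∈ W, |((z.2 - a' : ℤ) : ℝ)| ≤ 4 * N) :
    ∑ x ∈ FF J y W, syn (Gn C n) (z - x) ≤ 3 * (d + 1) * (C + 5) / N +
      2 * (d + 1) * ((n : ℝ) / (2 * (d + 1))) ^ (-(1 / 4) : ℝ) * 24 ^ d := by
  have hN1 : (1 : ℝ) ≤ N := by exact_mod_cast (by omega : 1 ≤ N)
  have hnN' : (n : ℝ) ≤ N := by exact_mod_cast hnN
  have hinv : (N : ℝ)⁻¹ ≤ 1 := inv_le_one_of_one_le₀ hN1
  have hsum : ∑ a' ∈ W, |Gn C n (0 : Fin d → ZMod N) (z.2 - a')| ≤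
      W.card * ((d + 1) * ((C + 5) * N)) := by
    rw [← nsmul_eq_mul]
    refine Finset.sum_le_card_nsmul _ _ _ fun a' ha' => ?_
    refine (Gn_zero_le C hC n _).trans ?_
    have := hz a' ha'
    gcongr
    linarith
  rcases hW with ⟨hW, hJ⟩ | ⟨hW, hJ⟩
  · have hW' : (W.card : ℝ) ≤ 1 := by exact_mod_cast hW
    have hJ' : (2 : ℝ) ≤ J.card := by exact_mod_cast hJ
    refine near_abs J y W z hN2 (Finset.card_pos.1 (by omega)) C n hn (2 * (d + 1)) (1 / 2) (3 / 4) _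
      (by positivity) (by norm_num) (by norm_num) (by linarith) ?_ ?_
    · intro ξ hξ a
      have h1 : ∑ a' ∈ W, |GG C ξ (a - a')| ≤ W.card * ((d + 1) * bet ξ ^ (-(1 / 2) : ℝ)) := by
        rw [← nsmul_eq_mul]
        exact Finset.sum_le_card_nsmul _ _ _ fun a' _ => GG_le_single C ξ hξ _
      have h2 := bet_pos ξ hξ
      have h3 : 0 ≤ (d + 1) * bet ξ ^ (-(1 / 2) : ℝ) := by positivity
      nlinarith
    · calc ((N : ℝ)⁻¹) ^ J.card * ∑ a' ∈ W, |Gn C n (0 : Fin d → ZMod N) (z.2 - a')|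
          ≤ ((N : ℝ)⁻¹) ^ 2 * (3 * ((d + 1) * ((C + 5) * N))) := by
            refine mul_le_mul (pow_le_pow_of_le_one (by positivity) hinv hJ)
              (hsum.trans ?_) (Finset.sum_nonneg fun _ _ => abs_nonneg _) (by positivity)
            gcongr
            linarith
        _ = _ := by field_simp
  · have hW' : (W.card : ℝ) ≤ 3 * N := by exact_mod_cast hW
    have hJ' : (3 : ℝ) ≤ J.card := by exact_mod_cast hJ
    refine near_abs J y W z hN2 (Finset.card_pos.1 (by omega)) C n hn (2 * (d + 1)) 1 (5 / 4) _
      (by positivity) (by norm_num) (by norm_num) (by linarith) ?_ ?_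
    · intro ξ hξ a
      exact GG_le_sum C ξ hξ W a
    · calc ((N : ℝ)⁻¹) ^ J.card * ∑ a' ∈ W, |Gn C n (0 : Fin d → ZMod N) (z.2 - a')|
          ≤ ((N : ℝ)⁻¹) ^ 3 * (3 * N * ((d + 1) * ((C + 5) * N))) := by
            refine mul_le_mul (pow_le_pow_of_le_one (by positivity) hinv hJ)
              (hsum.trans ?_) (Finset.sum_nonneg fun _ _ => abs_nonneg _) (by positivity)
            gcongr
        _ = _ := by field_simp

end nearsum

lemma exists_hit' (ν : ℕ) (hν : 1 ≤ ν) (Q : ZLat ν → Measure (ℕ → ZLat ν)) (hQ : IsLatRW ν Q) :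
    ∃ v : ZLat ν → ℝ, (∀ y, 0 ≤ v y) ∧ v 0 = 1 ∧
      (∀ y, y ≠ 0 → ∑ i, (v (y + Pi.single i 1) + v (y + Pi.single i (-1))) = 2 * ν * v y) ∧
      ∑ i, (v (Pi.single i 1) + v (Pi.single i (-1))) = 2 * ν * retProb ν Q := by
  obtain ⟨k, rfl⟩ : ∃ k, ν = k + 1 := ⟨ν - 1, by omega⟩
  obtain ⟨v, h1, h2, h3, h4⟩ := exists_hit k Q hQ
  refine ⟨v, h1, h2, fun y hy => ?_, ?_⟩
  · have := h3 y hy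
    rw [div_eq_iff (by positivity)] at this
    rw [this]; push_cast; ring
  · rw [div_eq_iff (by positivity)] at h4
    rw [h4]; push_cast; ring

lemma projE_add (d N : ℕ) (v w : Lat d) : projE d N (v + w) = projE d N v + projE d N w := by
  ext i <;> simp [projE]

section cmp
variable {d N : ℕ} [NeZero N]

lemma Pav_trans (f : Cyl d N → ℝ) (x z : Cyl d N) :
    Pav d N (fun w => f (w - x)) z = Pav d N f (z - x) := by
  unfold Pav
  simp only [add_sub_right_comm]

noncomputable def Rn (C : ℝ) (S : Finset (Cyl d N)) (n : ℕ) (z : Cyl d N) : ℝ :=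
  ∑ x ∈ S, (gg C (z - x) - syn (Gn C n) (z - x))

lemma Rn_zero (C : ℝ) (S : Finset (Cyl d N)) (z : Cyl d N) : Rn C S 0 z = 0 := by
  unfold Rn gg Gn
  simp

lemma Rn_succ (C : ℝ) (S : Finset (Cyl d N)) (n : ℕ) (z : Cyl d N) :
    Rn C S (n + 1) z = (Rn C S n z + Pav d N (Rn C S n) z + if z ∈ S then 1 else 0) / 2 := by
  have h1 : ∀ w : Cyl d N, gg C w - syn (Gn C (n + 1)) w =
      ((gg C w - syn (Gn C n) w) + (Pav d N (gg C) w - Pav d N (syn (Gn C n)) w) +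
        if w = 0 then 1 else 0) / 2 := by
    intro w
    have e : syn (Gn C (n + 1)) w = (syn (Gn C n) w + Pav d N (syn (Gn C n)) w) / 2 :=
      syn_Kl (Gn C n) w
    rw [e, ← gg_green C w]
    ring
  have h2 : Pav d N (Rn C S n) z = ∑ x ∈ S, (Pav d N (gg C) (z - x) -
      Pav d N (syn (Gn C n)) (z - x)) := by
    unfold Rn
    rw [Pav_sum]
    refine Finset.sum_congr rfl fun x _ => ?_
    rw [← Pav_trans, ← Pav_trans]
    have := Pav_add d N (fun w => gg C (w - x)) (fun w => -1 * syn (Gn C n) (w - x)) z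
    rw [Pav_smul] at this
    rw [sub_eq_add_neg, ← neg_one_mul (Pav d N _ z), ← this]
    congr 1
    ext w
    ring
  have h3 : (if z ∈ S then (1 : ℝ) else 0) = ∑ x ∈ S, if z - x = 0 then (1 : ℝ) else 0 := by
    simp only [sub_eq_zero]
    simp
  rw [h2, h3]
  unfold Rn
  rw [← Finset.sum_add_distrib, ← Finset.sum_add_distrib, Finset.sum_div]
  exact Finset.sum_congr rfl fun x _ => h1 (z - x)

lemma cmp (C : ℝ) (S : Finset (Cyl d N)) (Wt : Lat d → ℝ) (O : Set (Lat d))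
    (hW0 : ∀ w, 0 ≤ Wt w)
    (hW : ∀ w, Wt w = (∑ i : Fin (d + 1), (Wt (w + Pi.single i 1) + Wt (w + Pi.single i (-1)))) /
      (2 * (d + 1)) + if w ∈ O then 1 else 0)
    (zt : Lat d) (hS : ∀ w : Lat d, (∀ i, |w i| < N) → projE d N (zt + w) ∈ S → w ∈ O) (n : ℕ) :
    ∀ w : Lat d, (∀ i, |w i| + n < N) → Rn C S n (projE d N (zt + w)) ≤ Wt w := by
  induction n with
  | zero => intro w _; rw [Rn_zero]; exact hW0 w
  | succ n ih =>
    intro w hw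
    push_cast at hw
    rw [Rn_succ]
    have h1 := ih w fun i => by have := hw i; omega
    have h2 : Pav d N (Rn C S n) (projE d N (zt + w)) ≤
        (∑ i : Fin (d + 1), (Wt (w + Pi.single i 1) + Wt (w + Pi.single i (-1)))) /
      (2 * (d + 1)) := by
      have key : ∀ i : Fin (d + 1), ∀ s : ℤ, (s = 1 ∨ s = -1) →
          Rn C S n (projE d N (zt + w) + projE d N (Pi.single i s)) ≤ Wt (w + Pi.single i s) := by
        intro i s hs
        rw [← projE_add, add_assoc]
        refine ih _ fun l => ?_
        have h := hw l
        have : |(Pi.single i s : Lat d) l| ≤ 1 := by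
          rw [Pi.single_apply]
          rcases hs with rfl | rfl <;> split_ifs <;> simp
        have := abs_add_le (w l) ((Pi.single i s : Lat d) l)
        rw [Pi.add_apply]
        omega
      unfold Pav
      refine div_le_div_of_nonneg_right (Finset.sum_le_sum fun i _ => ?_) (by positivity)
      exact add_le_add (key i 1 (Or.inl rfl)) (key i (-1) (Or.inr rfl))
    have h3 : (if projE d N (zt + w) ∈ S then (1 : ℝ) else 0) ≤ if w ∈ O then 1 else 0 := by
      by_cases h : projE d N (zt + w) ∈ S
      · rw [if_pos h, if_pos]
        exact hS w (fun i => by have := hw i; omega) h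
      · rw [if_neg h]; split_ifs <;> norm_num
    have h4 := hW w
    linarith

lemma lat_weight (m : ℕ) (hm : m ≤ d) (I : Finset (Fin (d + 1))) (hI : I.card = m)
    (Q : ZLat (d + 1 - m) → Measure (ℕ → ZLat (d + 1 - m))) (hQ : IsLatRW (d + 1 - m) Q) (p : ℝ)
    (hp : p = (m : ℝ) / (d + 1) + (1 - (m : ℝ) / (d + 1)) * retProb (d + 1 - m) Q) (hp1 : p < 1) :
    ∃ Wt : Lat d → ℝ, (∀ w, 0 ≤ Wt w) ∧ Wt 0 = 1 / (1 - p) ∧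
      (∀ w, Wt w = (∑ i : Fin (d + 1), (Wt (w + Pi.single i 1) + Wt (w + Pi.single i (-1)))) /
      (2 * (d + 1)) + if w ∈ {w : Lat d | ∀ i ∉ I, w i = 0} then 1 else 0) := by
  obtain ⟨v, hv0, hv1, hv2, hv3⟩ := exists_hit' (d + 1 - m) (by omega) Q hQ
  have hc : (Iᶜ).card = d + 1 - m := by rw [Finset.card_compl, hI, Fintype.card_fin]
  set emb := (Iᶜ).orderEmbOfFin hc with hemb
  have hnu : ((d + 1 - m : ℕ) : ℝ) = d + 1 - m := by
    rw [Nat.cast_sub (by omega)]; push_cast; ring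
  have hq : 0 < 1 - p := by linarith
  have hmem : ∀ k, emb k ∉ I := fun k => by
    exact Finset.mem_compl.1 (Finset.orderEmbOfFin_mem Iᶜ hc k)
  have hsur : ∀ i ∉ I, ∃ k, emb k = i := fun i hi => by
    have : i ∈ Set.range emb := by rw [Finset.range_orderEmbOfFin]; simpa using hi
    exact this
  have hsum : ∀ f : Fin (d + 1) → ℝ, ∑ i, f i = ∑ i ∈ I, f i + ∑ k, f (emb k) := by
    intro f
    rw [← Finset.sum_add_sum_compl I f]
    congr 1
    have : Iᶜ = Finset.univ.map emb.toEmbedding := by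
      rw [hemb, Finset.map_orderEmbOfFin_univ]
    rw [this, Finset.sum_map]
    rfl
  have hpi1 : ∀ (w : Lat d) (i : Fin (d + 1)) (s : ℤ), i ∈ I →
      (fun k => (w + Pi.single i s : Lat d) (emb k)) = fun k => w (emb k) := by
    intro w i s hi
    ext k
    rw [Pi.add_apply, Pi.single_eq_of_ne, add_zero]
    rintro rfl
    exact hmem k hi
  have hpi2 : ∀ (w : Lat d) (l) (s : ℤ),
      (fun k => (w + Pi.single (emb l) s : Lat d) (emb k)) = (fun k => w (emb k)) + Pi.single l s := by
    intro w l s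
    ext k
    simp only [Pi.add_apply, Pi.single_apply, EmbeddingLike.apply_eq_iff_eq]
  have hO : ∀ w : Lat d, w ∈ {w : Lat d | ∀ i ∉ I, w i = 0} ↔ (fun k => w (emb k)) = 0 := by
    intro w
    simp only [Set.mem_ofPred_eq]
    constructor
    · intro h; ext k; exact h _ (hmem k)
    · intro h i hi
      obtain ⟨k, rfl⟩ := hsur i hi
      exact congrFun h k
  refine ⟨fun w => v (fun k => w (emb k)) / (1 - p), fun w => div_nonneg (hv0 _) hq.le, ?_, ?_⟩
  · show v 0 / (1 - p) = _
    rw [hv1]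
  · intro w
    simp only [← add_div]
    rw [← Finset.sum_div, hsum]
    simp only [hpi2]
    rw [Finset.sum_congr rfl fun i hi => by rw [hpi1 w i _ hi, hpi1 w i _ hi]]
    rw [Finset.sum_const, hI, nsmul_eq_mul]
    by_cases h : (fun k => w (emb k)) = 0
    · rw [if_pos ((hO w).2 h), h]
      simp only [zero_add]
      rw [hv3, hv1, hnu]
      have : ((m : ℝ) * (1 + 1) + 2 * (d + 1 - m) * retProb (d + 1 - m) Q) = 2 * (d + 1) * p := by
        rw [hp]; field_simp; ring
      rw [this]
      field_simp
      ring
    · rw [if_neg (fun h' => h ((hO w).1 h')), hv2 _ h, hnu]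
      field_simp
      ring

lemma FF_sep (I : Finset (Fin (d + 1))) (J : Finset (Fin d)) (hJ : ∀ i, i ∈ J ↔ i.castSucc ∉ I)
    (y : Fin d → ZMod N) (W : Finset ℤ) (hW : Fin.last d ∉ I → W.card ≤ 1) (zt : Lat d)
    (hz : projE d N zt ∈ FF J y W) (w : Lat d) (hw : ∀ i, |w i| < N)
    (h : projE d N (zt + w) ∈ FF J y W) : w ∈ {w : Lat d | ∀ i ∉ I, w i = 0} := by
  simp only [FF, Finset.mem_product, Fintype.mem_piFinset] at hz h
  rw [Set.mem_ofPred_eq]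
  intro i
  refine Fin.lastCases ?_ (fun i => ?_) i
  · intro hi
    have := Finset.card_le_one.1 (hW hi) _ hz.2 _ h.2
    simp only [projE, Pi.add_apply] at this
    omega
  · intro hi
    have h1 := hz.1 i
    have h2 := h.1 i
    simp only [TT, (hJ i).2 hi, if_true, Finset.mem_singleton, projE, Pi.add_apply] at h1 h2
    rw [← h1] at h2
    push_cast at h2
    have h3 : ((w i.castSucc : ℤ) : ZMod N) = 0 := by linear_combination h2
    rw [ZMod.intCast_zmod_eq_zero_iff_dvd] at h3
    exact Int.eq_zero_of_abs_lt_dvd h3 (hw _)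

end cmp

section fin
variable {d N : ℕ} [NeZero N]

lemma green_bound (hd : 3 ≤ d) (m : ℕ) (hm : m ≤ d - 2) (hN2 : 2 ≤ N) (j : ℤ)
    (A : Finset (Cyl d N)) (hA : A ∈ Adm d N j m)
    (Q : ZLat (d + 1 - m) → Measure (ℕ → ZLat (d + 1 - m))) (hQ : IsLatRW (d + 1 - m) Q) (p : ℝ)
    (hp : p = (m : ℝ) / (d + 1) + (1 - (m : ℝ) / (d + 1)) * retProb (d + 1 - m) Q) (hp1 : p < 1)
    (n : ℕ) (hn : 1 ≤ n) (hnN : n < N) (z : Cyl d N) (hz : z ∈ A) :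
    ∑ x ∈ A, gg (Cp d) (z - x) ≤ 1 / (1 - p) + (3 * (d + 1) * (Cp d + 5) / N +
      2 * (d + 1) * ((n : ℝ) / (2 * (d + 1))) ^ (-(1 / 4) : ℝ) * 24 ^ d) := by
  obtain ⟨-, hAC, F, ⟨I, hI, y, rfl⟩, hAF⟩ := hA
  have hCp : 0 ≤ Cp d := by have := Cd_nonneg (d := d) (by omega); unfold Cp; linarith
  have hN1 : (2 : ℝ) ≤ N := by exact_mod_cast hN2
  set J : Finset (Fin d) := Finset.univ.filter (fun i => i.castSucc ∉ I) with hJdef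
  have hJ : ∀ i, i ∈ J ↔ i.castSucc ∉ I := fun i => by simp [hJdef]
  set yb : Fin d → ZMod N := fun i => (y i.castSucc : ZMod N) with hyb
  set W : Finset ℤ := if Fin.last d ∉ I then {y (Fin.last d)} else
    Finset.Icc ⌈((j : ℝ) - 3 / 4) * N⌉ ⌊((j : ℝ) + 3 / 4) * N⌋ with hWdef
  have hAFF : A ⊆ FF J yb W := by
    intro x hx
    have hxC := hAC hx
    obtain ⟨v, hv, rfl⟩ := hAF hx
    rw [Set.mem_ofPred_eq] at hv
    simp only [Cblk, Set.mem_ofPred_eq] at hxC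
    simp only [FF, Finset.mem_product, Fintype.mem_piFinset]
    constructor
    · intro i
      unfold TT
      by_cases hi : i ∈ J
      · rw [if_pos hi, Finset.mem_singleton]
        simp [projE, hyb, hv _ ((hJ i).1 hi)]
      · rw [if_neg hi]; exact Finset.mem_univ _
    · by_cases hl : Fin.last d ∉ I
      · rw [hWdef, if_pos hl, Finset.mem_singleton]
        simp [projE, hv _ hl]
      · rw [hWdef, if_neg hl, Finset.mem_Icc]
        exact ⟨Int.ceil_le.2 hxC.1, Int.le_floor.2 hxC.2⟩
  have hW1 : Fin.last d ∉ I → W.card ≤ 1 := by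
    intro hl
    rw [hWdef, if_pos hl, Finset.card_singleton]
  have hclose : ∀ a ∈ W, ∀ b ∈ W, |((a - b : ℤ) : ℝ)| ≤ 4 * N := by
    intro a ha b hb
    by_cases hl : Fin.last d ∉ I
    · rw [Finset.card_le_one.1 (hW1 hl) a ha b hb]
      simp
    · rw [hWdef, if_neg hl, Finset.mem_Icc, Int.ceil_le, Int.le_floor] at ha hb
      push_cast
      rw [abs_le]
      constructor <;> nlinarith [ha.1, ha.2, hb.1, hb.2]
  have hzF := hAFF hz
  have hFW : ∀ x ∈ FF J yb W, x.2 ∈ W := by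
    intro x hx
    simp only [FF, Finset.mem_product] at hx
    exact hx.2
  have hcard : (W.card ≤ 1 ∧ 2 ≤ J.card) ∨ (W.card ≤ 3 * N ∧ 3 ≤ J.card) := by
    have hc : (Iᶜ).card = d + 1 - m := by rw [Finset.card_compl, hI, Fintype.card_fin]
    by_cases hl : Fin.last d ∉ I
    · left
      refine ⟨hW1 hl, ?_⟩
      have hsub : Iᶜ ⊆ insert (Fin.last d) (J.map Fin.castSuccEmb) := by
        intro i
        refine Fin.lastCases ?_ (fun i => ?_) i
        · intro _; exact Finset.mem_insert_self _ _
        · intro hi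
          refine Finset.mem_insert_of_mem (Finset.mem_map.2 ⟨i, (hJ i).2 (Finset.mem_compl.1 hi), rfl⟩)
      have := Finset.card_le_card hsub
      have h2 := Finset.card_insert_le (Fin.last d) (J.map Fin.castSuccEmb)
      rw [Finset.card_map] at h2
      omega
    · right
      constructor
      · rw [hWdef, if_neg hl, Int.card_Icc]
        have h1 := Int.floor_le (((j : ℝ) + 3 / 4) * N)
        have h2 := Int.le_ceil (((j : ℝ) - 3 / 4) * N)
        have h3 : ((⌊((j : ℝ) + 3 / 4) * N⌋ + 1 - ⌈((j : ℝ) - 3 / 4) * N⌉ : ℤ) : ℝ) ≤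
            ((3 * N : ℤ) : ℝ) := by
          push_cast
          nlinarith
        have h4 : (⌊((j : ℝ) + 3 / 4) * N⌋ + 1 - ⌈((j : ℝ) - 3 / 4) * N⌉ : ℤ) ≤ 3 * N := by
          exact_mod_cast h3
        omega
      · have hsub : Iᶜ ⊆ J.map Fin.castSuccEmb := by
          intro i
          refine Fin.lastCases ?_ (fun i => ?_) i
          · intro h; exact absurd (Finset.mem_compl.1 h) hl
          · intro hi
            exact Finset.mem_map.2 ⟨i, (hJ i).2 (Finset.mem_compl.1 hi), rfl⟩
        have := Finset.card_le_card hsub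
        rw [Finset.card_map] at this
        omega
  have hnb := near_bound (Cp d) hCp J yb W z hN2 n hn hnN.le hcard
    (fun a ha => hclose _ (hFW z hzF) _ ha)
  obtain ⟨v, hv, hvz⟩ := hAF hz
  simp only at hvz
  obtain ⟨Wt, hW0, hWz, hWrec⟩ := lat_weight (d := d) m (by omega) I hI Q hQ p hp hp1
  have hc := cmp (N := N) (Cp d) (FF J yb W) Wt _ hW0 (fun w => by convert hWrec w) (y + v)
    (FF_sep I J hJ yb W hW1 (y + v) (by rw [hvz]; exact hzF)) n 0
    (by intro i; simp only [Pi.zero_apply, abs_zero]; omega)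
  rw [add_zero, hvz, hWz] at hc
  unfold Rn at hc
  rw [Finset.sum_sub_distrib] at hc
  have hle : ∑ x ∈ A, gg (Cp d) (z - x) ≤ ∑ x ∈ FF J yb W, gg (Cp d) (z - x) := by
    refine Finset.sum_le_sum_of_subset_of_nonneg hAFF fun x hx _ => ?_
    have := hclose _ (hFW z hzF) _ (hFW x hx)
    rw [abs_le] at this
    refine gg_nonneg (by omega) _ ?_ ?_
    · have h := this.1
      rw [Prod.snd_sub]
      exact_mod_cast h
    · have h := this.2
      rw [Prod.snd_sub]
      exact_mod_cast h
  linarith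

end fin

section fin2
variable {d N : ℕ} [NeZero N]

noncomputable def c1 (d : ℕ) : ℝ := (d + 1) * Cp d + Cd d

noncomputable def hfun (κ : ℝ) (A : Finset (Cyl d N)) (z : Cyl d N) : ℝ :=
  1 + κ * ∑ x ∈ A, gg (Cp d) (z - x)

lemma Pav_hfun (κ : ℝ) (A : Finset (Cyl d N)) (z : Cyl d N) :
    Pav d N (hfun κ A) z = hfun κ A z - if z ∈ A then κ else 0 := by
  have h1 : Pav d N (hfun κ A) z = 1 + κ * ∑ x ∈ A, Pav d N (gg (Cp d)) (z - x) := by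
    unfold hfun
    rw [Pav_add, Pav_const, Pav_smul, Pav_sum]
    simp only [Pav_trans]
  have h2 : ∀ x, Pav d N (gg (Cp d)) (z - x) =
      gg (Cp d) (z - x) - if z - x = 0 then 1 else 0 := by
    intro x; rw [← gg_green (Cp d)]; ring
  rw [h1]
  simp only [h2, sub_eq_zero]
  rw [Finset.sum_sub_distrib]
  unfold hfun
  by_cases h : z ∈ A
  · simp [h]; ring
  · simp [h]

lemma superSol (hd : 3 ≤ d) (j : ℤ) (A : Finset (Cyl d N)) (hA : (A : Set (Cyl d N)) ⊆ Cblk d N j)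
    (lam χ : ℝ) (hlam : 0 < lam) (hχ : χ < 1) (κ : ℝ) (hκ : κ = (Real.exp lam - 1) / (1 - χ))
    (hG : ∀ z ∈ A, ∑ x ∈ A, gg (Cp d) (z - x) ≤ 1 + χ / (Real.exp lam - 1)) :
    SuperSol d N j A lam (κ * (A.card * (c1 d * N / (N : ℝ) ^ d))) (hfun κ A) := by
  have hN : (0 : ℝ) < N := by exact_mod_cast Nat.pos_of_ne_zero (NeZero.ne N)
  have hCd := Cd_nonneg (d := d) (by omega)
  have hCp : 0 ≤ Cp d := by unfold Cp; linarith
  have hc1 : 0 ≤ c1 d := by unfold c1; positivity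
  have he : 0 < Real.exp lam - 1 := by linarith [Real.add_one_le_exp lam]
  have hχ' : 0 < 1 - χ := by linarith
  have hκ0 : 0 < κ := by rw [hκ]; positivity
  have hC : ∀ x ∈ A, ((j : ℝ) - 3 / 4) * N ≤ (x.2 : ℝ) ∧ (x.2 : ℝ) ≤ ((j : ℝ) + 3 / 4) * N := by
    intro x hx
    exact hA hx
  refine ⟨by positivity, ?_, ?_, ?_, ?_, ?_⟩
  · intro x hx
    obtain ⟨h1, h2⟩ := hC x hx
    constructor
    · have : (((j - 1) * (N : ℤ) : ℤ) : ℝ) ≤ (x.2 : ℝ) := by push_cast; nlinarith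
      exact_mod_cast this
    · have : (x.2 : ℝ) ≤ (((j + 1) * (N : ℤ) : ℤ) : ℝ) := by push_cast; nlinarith
      exact_mod_cast this
  · intro z hz1 hz2
    unfold hfun
    have hz1' : (((j - 2) * (N : ℤ) : ℤ) : ℝ) ≤ (z.2 : ℝ) := by exact_mod_cast hz1
    have hz2' : (z.2 : ℝ) ≤ (((j + 2) * (N : ℤ) : ℤ) : ℝ) := by exact_mod_cast hz2
    push_cast at hz1' hz2'
    have : 0 ≤ ∑ x ∈ A, gg (Cp d) (z - x) := by
      refine Finset.sum_nonneg fun x hx => ?_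
      obtain ⟨h1, h2⟩ := hC x hx
      refine gg_nonneg (by omega) _ ?_ ?_
      · rw [Prod.snd_sub]
        have : ((-(4 * (N : ℤ)) : ℤ) : ℝ) ≤ ((z.2 - x.2 : ℤ) : ℝ) := by push_cast; nlinarith
        exact_mod_cast this
      · rw [Prod.snd_sub]
        have : ((z.2 - x.2 : ℤ) : ℝ) ≤ ((4 * (N : ℤ) : ℤ) : ℝ) := by push_cast; nlinarith
        exact_mod_cast this
    nlinarith [mul_nonneg hκ0.le this]
  · intro z _
    rw [Pav_hfun]
    split_ifs <;> linarith
  · intro z hz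
    rw [Pav_hfun, if_pos hz]
    have h1 := hG z hz
    unfold hfun
    set G := ∑ x ∈ A, gg (Cp d) (z - x)
    have h2 : (Real.exp lam - 1) * G ≤ Real.exp lam - 1 + χ := by
      have := mul_le_mul_of_nonneg_left h1 he.le
      rw [mul_add, mul_one, mul_div_cancel₀ _ he.ne'] at this
      exact this
    have h3 : κ * (1 - χ) = Real.exp lam - 1 := by rw [hκ]; field_simp
    have h4 := mul_le_mul_of_nonneg_left h2 hκ0.le
    nlinarith
  · intro z hz
    unfold hfun
    have : ∑ x ∈ A, gg (Cp d) (z - x) ≤ A.card * (c1 d * N / (N : ℝ) ^ d) := by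
      rw [← nsmul_eq_mul]
      refine Finset.sum_le_card_nsmul _ _ _ fun x hx => ?_
      obtain ⟨h1, h2⟩ := hC x hx
      refine gg_far (by omega) _ ?_
      rw [Prod.snd_sub, Nat.cast_natAbs, Int.cast_abs]
      push_cast
      rcases hz with hz | hz
      · rw [hz]; push_cast
        have := neg_le_abs ((((j : ℝ) - 1) * N) - x.2)
        nlinarith
      · rw [hz]; push_cast
        have := le_abs_self ((((j : ℝ) + 1) * N) - x.2)
        nlinarith
    have := mul_le_mul_of_nonneg_left this hκ0.le
    linarith

lemma final_N (hd : 3 ≤ d) (j : ℤ) (A : Finset (Cyl d N)) (hAn : A.Nonempty)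
    (hA : (A : Set (Cyl d N)) ⊆ Cblk d N j)
    (lam χ : ℝ) (hlam : 0 < lam) (hχ : χ < 1)
    (hG : ∀ z ∈ A, ∑ x ∈ A, gg (Cp d) (z - x) ≤ 1 + χ / (Real.exp lam - 1))
    (Pl : Cyl d N → Measure (ℕ → Cyl d N)) (hP : IsCylRW d N Pl) (u : ℝ) (hu : 0 < u)
    (hu1 : 1 ≤ u * (N : ℝ) ^ (d - 1)) :
    (A.card : ℝ)⁻¹ * Real.log (∫ ω, Real.exp (lam * ecount j A ⌊u * (N : ℝ) ^ (d - 1)⌋₊ ω)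
      ∂(lawP d N Pl)) ≤ (c1 d + (d + 1) * Cp d) * u * (Real.exp lam - 1) / (1 - χ) := by
  have hN : (0 : ℝ) < N := by exact_mod_cast Nat.pos_of_ne_zero (NeZero.ne N)
  have hCd := Cd_nonneg (d := d) (by omega)
  have hCp : 0 ≤ Cp d := by unfold Cp; linarith
  have hc1 : 0 ≤ c1 d := by unfold c1; positivity
  have he : 0 < Real.exp lam - 1 := by linarith [Real.add_one_le_exp lam]
  have hχ' : 0 < 1 - χ := by linarith
  set κ := (Real.exp lam - 1) / (1 - χ) with hκ
  have hκ0 : 0 < κ := by positivity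
  have hAc : (0 : ℝ) < A.card := by exact_mod_cast hAn.card_pos
  have H := superSol hd j A hA lam χ hlam hχ κ hκ hG
  obtain ⟨k, hk⟩ : ∃ k, ⌊u * (N : ℝ) ^ (d - 1)⌋₊ = k + 1 := by
    have : 1 ≤ ⌊u * (N : ℝ) ^ (d - 1)⌋₊ := Nat.le_floor (by simpa using hu1)
    exact ⟨_, (Nat.sub_add_cancel this).symm⟩
  have hkle : ((k + 1 : ℕ) : ℝ) ≤ u * (N : ℝ) ^ (d - 1) := by
    rw [← hk]; exact Nat.floor_le (by positivity)
  set g := (N : ℝ) / (N : ℝ) ^ d with hg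
  have hg0 : 0 < g := by positivity
  have hgN : g * (N : ℝ) ^ (d - 1) = 1 := by
    rw [hg, div_mul_eq_mul_div, ← pow_succ', Nat.sub_add_cancel (by omega), div_self (by positivity)]
  set δ := κ * (A.card * ((d + 1) * Cp d * g)) with hδ
  set ε := κ * (A.card * (c1 d * N / (N : ℝ) ^ d)) with hε
  have hδ0 : 0 ≤ δ := by positivity
  have hε0 : 0 ≤ ε := by positivity
  have hrow : ∀ a : ℤ, (j - 1) * (N : ℤ) ≤ a → a ≤ (j + 1) * (N : ℤ) →
      ∑ y : Fin d → ZMod N, hfun κ A (y, a) ≤ (N : ℝ) ^ d * (1 + δ) := by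
    intro a _ _
    unfold hfun
    rw [Finset.sum_add_distrib, ← Finset.mul_sum, Finset.sum_comm]
    have h1 : ∀ x ∈ A, ∑ y : Fin d → ZMod N, gg (Cp d) ((y, a) - x) ≤ (d + 1) * Cp d * N := by
      intro x _
      have : ∑ y : Fin d → ZMod N, gg (Cp d) ((y, a) - x) =
          ∑ y : Fin d → ZMod N, gg (Cp d) (y, a - x.2) :=
        Fintype.sum_equiv (Equiv.subRight x.1) _ _ (fun t => rfl)
      rw [this, gg_hsum]
      have := abs_nonneg (((a - x.2 : ℤ)) : ℝ)
      have : (0 : ℝ) ≤ d + 1 := by positivity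
      nlinarith
    have h2 := Finset.sum_le_card_nsmul _ _ _ h1
    rw [nsmul_eq_mul] at h2
    have h3 := mul_le_mul_of_nonneg_left h2 hκ0.le
    have h4 : ∑ _y : Fin d → ZMod N, (1 : ℝ) = (N : ℝ) ^ d := by
      simp [ZMod.card]
    rw [h4]
    have h5 : (N : ℝ) ^ d * δ = κ * (A.card * ((d + 1) * Cp d * N)) := by
      rw [hδ, hg]; field_simp
    rw [mul_add, mul_one, h5]
    linarith
  have hE := expect_avg hP hlam.le H k δ hδ0 hrow
  rw [hk]
  set E := ∫ ω, Real.exp (lam * ecount j A (k + 1) ω) ∂(lawP d N Pl) with hEdef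
  have hE0 : 0 ≤ E := integral_nonneg fun ω => (Real.exp_pos _).le
  have hlog : Real.log E ≤ δ + (k + 1 : ℕ) * ε := by
    rcases hE0.eq_or_lt with h | h
    · rw [← h, Real.log_zero]; positivity
    · refine (Real.log_le_log h hE).trans ?_
      rw [Real.log_mul (by positivity) (by positivity), Real.log_pow]
      have l1 := Real.log_le_sub_one_of_pos (show 0 < 1 + δ by positivity)
      have l2 := Real.log_le_sub_one_of_pos (show 0 < 1 + ε by positivity)
      have := mul_le_mul_of_nonneg_left l2 (Nat.cast_nonneg (k + 1))
      nlinarith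
  have hgu : g ≤ u := by
    have := mul_le_mul_of_nonneg_left hu1 hg0.le
    calc g = g * 1 := (mul_one g).symm
      _ ≤ g * (u * (N : ℝ) ^ (d - 1)) := this
      _ = u * (g * (N : ℝ) ^ (d - 1)) := by ring
      _ = u := by rw [hgN, mul_one]
  have hkg : ((k + 1 : ℕ) : ℝ) * g ≤ u := by
    calc ((k + 1 : ℕ) : ℝ) * g ≤ (u * (N : ℝ) ^ (d - 1)) * g := by gcongr
      _ = u * (g * (N : ℝ) ^ (d - 1)) := by ring
      _ = u := by rw [hgN, mul_one]
  have hε' : ε = κ * (A.card * (c1 d * g)) := by rw [hε, hg]; ring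
  calc (A.card : ℝ)⁻¹ * Real.log E ≤ (A.card : ℝ)⁻¹ * (δ + (k + 1 : ℕ) * ε) := by gcongr
    _ = κ * ((d + 1) * Cp d * g + c1 d * ((k + 1 : ℕ) * g)) := by
        rw [hδ, hε']; field_simp
    _ ≤ κ * ((d + 1) * Cp d * u + c1 d * u) := by gcongr
    _ = _ := by rw [hκ]; ring

end fin2

lemma limsup_le_real {f : ℕ → ℝ} {b : ℝ} (hb : 0 ≤ b) (h : ∀ᶠ n in atTop, f n ≤ b) :
    limsup f atTop ≤ b := by
  rw [limsup_eq]
  by_cases hB : BddBelow {a | ∀ᶠ n in atTop, f n ≤ a}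
  · exact csInf_le hB h
  · rw [Real.sInf_of_not_bddBelow hB]; exact hb

/-- **Theorem 1.2, part 1.** Exponential moment bound: there is a constant `c`
depending only on `d` such that for all admissible `m`, `λ` with `χ(λ) < 1` and all
`u > 0`,
`limsup_N sup_{j,A∈A^j_m} |A|⁻¹ log E[exp(λ Σ_{x∈A} 1{H_x ≤ D^j_{uN^{d-1}}})]
  ≤ c u (e^λ - 1)/(1 - χ(λ))`. -/
theorem statement_3 (d : ℕ) (hd : 3 ≤ d) :
    ∃ c : ℝ, 0 < c ∧
      ∀ m : ℕ, 1 ≤ m → m ≤ d - 2 →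
      ∀ Q : ZLat (d + 1 - m) → Measure (ℕ → ZLat (d + 1 - m)), IsLatRW (d + 1 - m) Q →
      ∀ lam : ℝ, 0 < lam →
        Real.exp lam * ((m : ℝ) / (d + 1) + (1 - (m : ℝ) / (d + 1)) * retProb (d + 1 - m) Q)
          < 1 →
      ∀ Pl : ∀ N : ℕ, Cyl d N → Measure (ℕ → Cyl d N), (∀ N : ℕ, IsCylRW d N (Pl N)) →
      ∀ u : ℝ, 0 < u →
        limsup (fun N : ℕ =>
            sSup {r : ℝ | ∃ j : ℤ, ∃ A ∈ Adm d N j m,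
              r = (A.card : ℝ)⁻¹ *
                Real.log (∫ ω,
                  Real.exp (lam * ∑ x ∈ A,
                    if entT {x} ω ≤ DD d N j ⌊u * (N : ℝ) ^ (d - 1)⌋₊ ω then (1 : ℝ) else 0)
                  ∂(lawP d N (Pl N)))}) atTop
          ≤ c * u * (Real.exp lam - 1) /
              (1 - Real.exp lam *
                ((m : ℝ) / (d + 1) + (1 - (m : ℝ) / (d + 1)) * retProb (d + 1 - m) Q)) := by
  have hCd := Cd_nonneg (d := d) (by omega)
  have hCp : 0 < Cp d := by unfold Cp; linarith
  have hc1 : 0 ≤ c1 d := by unfold c1; positivity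
  refine ⟨c1 d + (d + 1) * Cp d, by positivity, ?_⟩
  intro m hm1 hm2 Q hQ lam hlam hχ Pl hP u hu
  set p := (m : ℝ) / (d + 1) + (1 - (m : ℝ) / (d + 1)) * retProb (d + 1 - m) Q with hp
  set χ := Real.exp lam * p with hχdef
  have he : 0 < Real.exp lam - 1 := by linarith [Real.add_one_le_exp lam]
  have hχ' : 0 < 1 - χ := by linarith
  have hmd : (m : ℝ) ≤ d := by exact_mod_cast (by omega : m ≤ d)
  have hm1' : (1 : ℝ) ≤ m := by exact_mod_cast hm1
  have hp0 : 0 < p := by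
    have h1 : 0 ≤ retProb (d + 1 - m) Q := ENNReal.toReal_nonneg
    have h2 : (m : ℝ) / (d + 1) ≤ 1 := by rw [div_le_one (by positivity)]; linarith
    have h3 : 0 < (m : ℝ) / (d + 1) := by positivity
    have : 0 ≤ (1 - (m : ℝ) / (d + 1)) * retProb (d + 1 - m) Q := mul_nonneg (by linarith) h1
    linarith
  have hp1 : p < 1 := by nlinarith
  have hgap : 1 / (1 - p) < 1 + χ / (Real.exp lam - 1) := by
    have h1 : 0 < 1 - p := by linarith
    have e1 : 1 / (1 - p) = 1 + p / (1 - p) := by field_simp; ring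
    rw [e1]
    refine add_lt_add_right ?_ 1
    rw [div_lt_div_iff₀ h1 he, hχdef]
    nlinarith
  -- choice of n0
  have hT : Tendsto (fun n : ℕ => 1 / (1 - p) + (3 * (d + 1) * (Cp d + 5) / ((n + 1 : ℕ) : ℝ) +
      2 * (d + 1) * ((n : ℝ) / (2 * (d + 1))) ^ (-(1 / 4) : ℝ) * 24 ^ d)) atTop
      (nhds (1 / (1 - p) + (0 + 2 * (d + 1) * 0 * 24 ^ d))) := by
    refine tendsto_const_nhds.add (Tendsto.add ?_ ?_)
    · exact tendsto_const_nhds.div_atTop (tendsto_natCast_atTop_atTop.comp (tendsto_add_atTop_nat 1))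
    · refine Tendsto.mul_const _ (Tendsto.const_mul _ ?_)
      refine (tendsto_rpow_neg_atTop (by norm_num)).comp ?_
      exact tendsto_natCast_atTop_atTop.atTop_div_const (by positivity)
  rw [mul_zero, zero_mul, add_zero, add_zero] at hT
  obtain ⟨n, hn1, hn⟩ := ((eventually_ge_atTop 1).and (hT.eventually (gt_mem_nhds hgap))).exists
  refine limsup_le_real (by positivity) ?_
  have hTu : Tendsto (fun N : ℕ => u * (N : ℝ) ^ (d - 1)) atTop atTop :=
    Tendsto.const_mul_atTop hu ((tendsto_pow_atTop (by omega)).comp tendsto_natCast_atTop_atTop)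
  filter_upwards [eventually_ge_atTop (n + 2), hTu.eventually_ge_atTop 1] with N hN hNu
  haveI : NeZero N := ⟨by omega⟩
  refine Real.sSup_le ?_ (by positivity)
  rintro r ⟨j, A, hA, rfl⟩
  refine final_N hd j A hA.1 hA.2.1 lam χ hlam hχ ?_ (Pl N) (hP N) u hu hNu
  intro z hz
  refine (green_bound hd m hm2 (by omega) j A hA Q hQ p hp hp1 n hn1 (by omega) z hz).trans ?_
  refine le_trans ?_ hn.le
  have : ((n + 1 : ℕ) : ℝ) ≤ N := by exact_mod_cast (by omega : n + 1 ≤ N)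
  gcongr

end DiscCyl
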